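/- arXiv:1805.01121 — 2 statements merged into one kernel-verified Lean document; each statement's English description precedes it below -/
import Mathlib

section
/- Let n ≥ 3 be an integer, let τ be a complex number with Im(τ) > 0, set q = e^{πiτ} and τ' = -1/τ. Then q^{(n-1)(n+1)/12} · ((q; q²)_∞)² / ((q^n; q^{2n})_∞)^{2n} = (1/n) · (θ₁'(0 | τ'/n) / θ₁'(0 | τ')) · (θ₁(π/2 | τ') / θ₁(π/2 | τ'/n)) · ((θ₁(π/n | τ'/n))² ∏_{j=2}^{n-2} θ₁(jπ/n | τ'/n)) / (θ₁(π/2 | τ'/n))^{n-1}, where q^{(n-1)(n+1)/12} denotes e^{πiτ(n-1)(n+1)/12} and θ₁' denotes the derivative of θ₁(z | τ) with respect to z. -/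
open Complex

/-- Infinite q-Pochhammer symbol `(a; q)_∞ = ∏_{i=0}^∞ (1 - a qⁱ)`. -/
noncomputable def qPoch (a q : ℂ) : ℂ := ∏' i : ℕ, (1 - a * q ^ i)

/-- Jacobi's first theta function
`θ₁(z | τ) = 2 ∑_{n=0}^∞ (-1)ⁿ e^{πiτ(2n+1)²/4} sin((2n+1)z)`. -/
noncomputable def theta1 (z τ : ℂ) : ℂ :=
  2 * ∑' n : ℕ, (-1 : ℂ) ^ n * Complex.exp (Real.pi * Complex.I * τ * (2 * n + 1) ^ 2 / 4) *
    Complex.sin ((2 * n + 1) * z)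

/-- The derivative of `θ₁(z | τ)` with respect to `z`. -/
noncomputable def theta1' (z τ : ℂ) : ℂ := deriv (fun w => theta1 w τ) z

open Filter Topology

/-- The Gaussian binomial coefficient, defined by the `q`-Pascal recurrence. -/
noncomputable def gaussBinom (p : ℂ) : ℕ → ℕ → ℂ
  | _, 0 => 1
  | 0, _ + 1 => 0
  | N + 1, j + 1 => gaussBinom p N j + p ^ (j + 1) * gaussBinom p N (j + 1)

lemma gaussBinom_zero_right (p : ℂ) (N : ℕ) : gaussBinom p N 0 = 1 := by
  cases N <;> rfl

lemma gaussBinom_succ_succ (p : ℂ) (N j : ℕ) :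
    gaussBinom p (N + 1) (j + 1) = gaussBinom p N j + p ^ (j + 1) * gaussBinom p N (j + 1) := rfl

lemma gaussBinom_eq_zero_of_lt (p : ℂ) {N j : ℕ} (h : N < j) : gaussBinom p N j = 0 := by
  induction N generalizing j with
  | zero => obtain ⟨j, rfl⟩ := Nat.exists_eq_succ_of_ne_zero h.ne'; rfl
  | succ N ih =>
    obtain ⟨j, rfl⟩ := Nat.exists_eq_succ_of_ne_zero (Nat.ne_zero_of_lt h)
    rw [Nat.succ_eq_add_one, gaussBinom_succ_succ, ih (by omega), ih (by omega)]
    simp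

/-- The finite `q`-Pochhammer symbol `(p; p)_N`. -/
noncomputable def qFactor (p : ℂ) (N : ℕ) : ℂ := ∏ i ∈ Finset.range N, (1 - p * p ^ i)

lemma gaussBinom_mul_qFactor (p : ℂ) (N : ℕ) : ∀ j k : ℕ, j + k = N →
    gaussBinom p N j * qFactor p j * qFactor p k = qFactor p N := by
  induction N with
  | zero =>
    intro j k h
    obtain ⟨rfl, rfl⟩ : j = 0 ∧ k = 0 := by omega
    simp [gaussBinom, qFactor]
  | succ N ih =>
    intro j k h
    rcases j with _ | j
    · obtain rfl : k = N + 1 := by omega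
      simp [gaussBinom_zero_right, qFactor]
    rw [gaussBinom_succ_succ]
    have hs (m : ℕ) : qFactor p (m + 1) = qFactor p m * (1 - p * p ^ m) :=
      Finset.prod_range_succ _ _
    rcases k with _ | k
    · obtain rfl : j = N := by omega
      have := ih j 0 (by omega)
      rw [gaussBinom_eq_zero_of_lt p (Nat.lt_succ_self j), hs]
      linear_combination (1 - p * p ^ j) * this
    · have h1 := ih j (k + 1) (by omega)
      have h2 := ih (j + 1) k (by omega)
      obtain rfl : N = j + k + 1 := by omega
      rw [hs (j + k + 1)]
      rw [hs k] at h1 ⊢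
      rw [hs j] at h2 ⊢
      linear_combination (1 - p * p ^ j) * h1 + p ^ (j + 1) * (1 - p * p ^ k) * h2

/-- The `q`-binomial theorem. -/
lemma prod_one_add_eq_sum_gaussBinom (p : ℂ) (N : ℕ) (y : ℂ) :
    ∏ k ∈ Finset.range N, (1 + y * p ^ k) =
      ∑ j ∈ Finset.range (N + 1), p ^ (j.choose 2) * gaussBinom p N j * y ^ j := by
  induction N generalizing y with
  | zero => simp [gaussBinom_zero_right]
  | succ N ih =>
    have h : ∏ k ∈ Finset.range (N + 1), (1 + y * p ^ k) =
        (1 + y) * ∏ k ∈ Finset.range N, (1 + y * p * p ^ k) := by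
      rw [Finset.prod_range_succ', mul_comm]
      simp only [pow_zero, mul_one, pow_succ']
      simp only [mul_assoc]
    rw [h, ih, add_mul, one_mul, Finset.sum_range_succ' _ (N + 1)]
    have hc (j : ℕ) : (j + 1).choose 2 = j + j.choose 2 := by
      rw [Nat.choose_succ_succ' j 1, Nat.choose_one_right]
    have e1 : ∑ j ∈ Finset.range (N + 1), p ^ (j.choose 2) * gaussBinom p N j * (y * p) ^ j =
        ∑ j ∈ Finset.range (N + 1),
          p ^ ((j + 1).choose 2) * gaussBinom p N (j + 1) * (y * p) ^ (j + 1) + 1 := by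
      rw [Finset.sum_range_succ', Finset.sum_range_succ _ N,
        gaussBinom_eq_zero_of_lt p (Nat.lt_succ_self N)]
      simp [gaussBinom_zero_right]
    have e2 : y * ∑ j ∈ Finset.range (N + 1), p ^ (j.choose 2) * gaussBinom p N j * (y * p) ^ j =
        ∑ j ∈ Finset.range (N + 1), p ^ ((j + 1).choose 2) * gaussBinom p N j * y ^ (j + 1) := by
      rw [Finset.mul_sum]
      refine Finset.sum_congr rfl fun j _ ↦ ?_
      rw [hc]
      ring
    rw [e2, e1]
    simp only [gaussBinom_zero_right, Nat.choose_zero_succ, pow_zero, mul_one]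
    rw [add_right_comm, ← Finset.sum_add_distrib]
    congr 1
    refine Finset.sum_congr rfl fun j _ ↦ ?_
    rw [gaussBinom_succ_succ]
    ring

lemma multipliable_qPoch (a : ℂ) {p : ℂ} (hp : ‖p‖ < 1) :
    Multipliable fun i : ℕ ↦ 1 - a * p ^ i := by
  simp_rw [sub_eq_add_neg]
  apply multipliable_one_add_of_summable
  simpa using (summable_geometric_of_lt_one (norm_nonneg p) hp).mul_left ‖a‖

lemma tendsto_qPoch (a : ℂ) {p : ℂ} (hp : ‖p‖ < 1) :
    Tendsto (fun N ↦ ∏ i ∈ Finset.range N, (1 - a * p ^ i)) atTop (𝓝 (qPoch a p)) :=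
  (multipliable_qPoch a hp).hasProd.tendsto_prod_nat

lemma qPoch_ne_zero {a p : ℂ} (hp : ‖p‖ < 1) (ha : ‖a‖ < 1) : qPoch a p ≠ 0 := by
  unfold qPoch
  simp_rw [sub_eq_add_neg]
  refine tprod_one_add_ne_zero_of_summable (fun i h ↦ ?_) ?_
  · have h1 : a * p ^ i = 1 := by linear_combination -h
    have h2 : ‖a * p ^ i‖ < 1 := by
      rw [norm_mul, norm_pow]
      exact mul_lt_one_of_nonneg_of_lt_one_left (norm_nonneg _) ha
        (pow_le_one₀ (norm_nonneg _) hp.le)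
    simp [h1] at h2
  · simpa using (summable_geometric_of_lt_one (norm_nonneg p) hp).mul_left ‖a‖

lemma qFactor_ne_zero {p : ℂ} (hp : ‖p‖ < 1) (N : ℕ) : qFactor p N ≠ 0 := by
  refine Finset.prod_ne_zero_iff.mpr fun i _ h ↦ ?_
  have h1 : ‖p ^ (i + 1)‖ < 1 := by
    rw [norm_pow]
    exact pow_lt_one₀ (norm_nonneg _) hp (by omega)
  rw [show p ^ (i + 1) = 1 by linear_combination -h] at h1
  simp at h1

lemma gaussBinom_eq {p : ℂ} (hp : ‖p‖ < 1) {N j : ℕ} (h : j ≤ N) :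
    gaussBinom p N j = qFactor p N * (qFactor p j)⁻¹ * (qFactor p (N - j))⁻¹ := by
  have := gaussBinom_mul_qFactor p N j (N - j) (by omega)
  have h1 := qFactor_ne_zero hp j
  have h2 := qFactor_ne_zero hp (N - j)
  field_simp
  exact this

lemma exists_norm_gaussBinom_le {p : ℂ} (hp : ‖p‖ < 1) :
    ∃ C : ℝ, 0 ≤ C ∧ ∀ N j, ‖gaussBinom p N j‖ ≤ C := by
  have ht : Tendsto (qFactor p) atTop (𝓝 (qPoch p p)) := tendsto_qPoch p hp
  obtain ⟨B, hB⟩ := ht.norm.bddAbove_range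
  obtain ⟨B', hB'⟩ := (ht.inv₀ (qPoch_ne_zero hp hp)).norm.bddAbove_range
  have hB (i : ℕ) : ‖qFactor p i‖ ≤ B := hB ⟨i, rfl⟩
  have hB' (i : ℕ) : ‖(qFactor p i)⁻¹‖ ≤ B' := hB' ⟨i, rfl⟩
  have h0 : 0 ≤ B := (norm_nonneg _).trans (hB 0)
  have h0' : 0 ≤ B' := (norm_nonneg _).trans (hB' 0)
  refine ⟨B * B' * B', by positivity, fun N j ↦ ?_⟩
  rcases le_or_gt j N with h | h
  · rw [gaussBinom_eq hp h, norm_mul, norm_mul]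
    gcongr <;> simp only [hB, hB']
  · rw [gaussBinom_eq_zero_of_lt p h, norm_zero]
    positivity

lemma tendsto_gaussBinom {p : ℂ} (hp : ‖p‖ < 1) (m : ℤ) :
    Tendsto (fun M : ℕ ↦ gaussBinom p (2 * M) (m + M).toNat) atTop (𝓝 (qPoch p p)⁻¹) := by
  have ht : Tendsto (qFactor p) atTop (𝓝 (qPoch p p)) := tendsto_qPoch p hp
  have h0 := qPoch_ne_zero hp hp
  have t1 : Tendsto (fun M : ℕ ↦ 2 * M) atTop atTop :=
    tendsto_atTop_mono (fun M ↦ by simp only [id]; omega) tendsto_id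
  have t2 : Tendsto (fun M : ℕ ↦ (m + M).toNat) atTop atTop :=
    tendsto_atTop_mono (fun M ↦ by omega) (tendsto_sub_atTop_nat m.natAbs)
  have t3 : Tendsto (fun M : ℕ ↦ 2 * M - (m + M).toNat) atTop atTop :=
    tendsto_atTop_mono (fun M ↦ by omega) (tendsto_sub_atTop_nat m.natAbs)
  have := ((ht.comp t1).mul ((ht.comp t2).inv₀ h0)).mul ((ht.comp t3).inv₀ h0)
  rw [mul_inv_cancel₀ h0, one_mul] at this
  refine this.congr' ?_
  filter_upwards [eventually_ge_atTop m.natAbs] with M hM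
  have h : (m + M).toNat ≤ 2 * M := by omega
  exact (gaussBinom_eq hp h).symm

/-- The finite form of the Jacobi triple product. -/
lemma finite_triple_product (u τ : ℂ) (M : ℕ) :
    (∏ i ∈ Finset.range M, (1 + Complex.exp (2 * Real.pi * I * u) *
        Complex.exp (2 * Real.pi * I * τ) ^ i)) *
      ∏ i ∈ Finset.range M, (1 + Complex.exp (2 * Real.pi * I * (τ - u)) *
        Complex.exp (2 * Real.pi * I * τ) ^ i) =
    ∑' m : ℤ, if -(M : ℤ) ≤ m then jacobiTheta₂_term m (u - τ / 2) τ *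
      gaussBinom (Complex.exp (2 * Real.pi * I * τ)) (2 * M) (m + M).toNat else 0 := by
  have hinj : Function.Injective fun j : ℕ ↦ (j : ℤ) - M := fun a b h ↦ by
    simp only at h; omega
  rw [← hinj.tsum_eq, tsum_eq_sum (s := Finset.range (2 * M + 1))]
  rotate_left
  · intro j hj
    rw [Finset.mem_range, not_lt] at hj
    rw [gaussBinom_eq_zero_of_lt _ (show 2 * M < ((j : ℤ) - M + M).toNat by omega)]
    simp
  · intro m hm
    have : -(M : ℤ) ≤ m := by
      by_contra h
      simp [h] at hm
    exact ⟨(m + M).toNat, by simp only; omega⟩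
  have key := prod_one_add_eq_sum_gaussBinom (Complex.exp (2 * Real.pi * I * τ)) (2 * M)
    (Complex.exp (2 * Real.pi * I * (u - M * τ)))
  rw [two_mul M, Finset.prod_range_add] at key
  have hA : ∏ k ∈ Finset.range M, (1 + Complex.exp (2 * Real.pi * I * (u - M * τ)) *
      Complex.exp (2 * Real.pi * I * τ) ^ k) =
      Complex.exp (2 * Real.pi * I * (M * u - M * (M + 1) / 2 * τ)) *
      ∏ i ∈ Finset.range M, (1 + Complex.exp (2 * Real.pi * I * (τ - u)) *
        Complex.exp (2 * Real.pi * I * τ) ^ i) := by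
    rw [← Finset.prod_range_reflect]
    have : ∀ N : ℕ, Complex.exp (2 * Real.pi * I * (N * u - N * (N + 1) / 2 * τ)) =
        ∏ i ∈ Finset.range N, Complex.exp (2 * Real.pi * I * (u - (i + 1) * τ)) := by
      intro N
      rw [← Complex.exp_sum]
      congr 1
      induction N with
      | zero => simp
      | succ N ih =>
        rw [Finset.sum_range_succ, ← ih]
        push_cast
        ring
    rw [this, ← Finset.prod_mul_distrib]
    refine Finset.prod_congr rfl fun i hi ↦ ?_
    rw [Finset.mem_range] at hi
    have hcast : ((M - 1 - i : ℕ) : ℂ) = M - 1 - i := by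
      rw [Nat.cast_sub (by omega), Nat.cast_sub (by omega)]
      simp
    rw [mul_add, ← Complex.exp_nat_mul, ← Complex.exp_nat_mul, ← Complex.exp_add,
      ← Complex.exp_add, ← Complex.exp_add, hcast, mul_one, add_comm]
    congr 1
    · congr 1
      ring
    · refine Complex.exp_zero.symm.trans (congrArg Complex.exp ?_)
      ring
  have hB : ∏ k ∈ Finset.range M, (1 + Complex.exp (2 * Real.pi * I * (u - M * τ)) *
      Complex.exp (2 * Real.pi * I * τ) ^ (M + k)) =
      ∏ i ∈ Finset.range M, (1 + Complex.exp (2 * Real.pi * I * u) *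
        Complex.exp (2 * Real.pi * I * τ) ^ i) := by
    refine Finset.prod_congr rfl fun i _ ↦ ?_
    rw [← Complex.exp_nat_mul, ← Complex.exp_nat_mul, ← Complex.exp_add, ← Complex.exp_add]
    congr 2
    push_cast
    ring
  rw [hA, hB] at key
  apply mul_left_cancel₀ (Complex.exp_ne_zero (2 * Real.pi * I * (M * u - M * (M + 1) / 2 * τ)))
  refine Eq.trans ?_ (key.trans ?_)
  · ring
  rw [Finset.mul_sum, ← two_mul M]
  refine Finset.sum_congr rfl fun j _ ↦ ?_
  rw [if_pos (by omega), show ((j : ℤ) - M + M).toNat = j by omega, jacobiTheta₂_term,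
    mul_right_comm, ← mul_assoc, ← Complex.exp_nat_mul, ← Complex.exp_nat_mul, ← Complex.exp_add,
    ← Complex.exp_add, Nat.cast_choose_two]
  congr 2
  push_cast
  ring

lemma norm_cexp_two_pi_I_mul_lt_one {τ : ℂ} (hτ : 0 < τ.im) :
    ‖Complex.exp (2 * Real.pi * I * τ)‖ < 1 := by
  simpa using UpperHalfPlane.norm_exp_two_pi_I_lt_one ⟨τ, hτ⟩

/-- The Jacobi triple product. -/
lemma jacobi_triple_product (u : ℂ) {τ : ℂ} (hτ : 0 < τ.im) :
    jacobiTheta₂ (u - τ / 2) τ =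
      qPoch (Complex.exp (2 * Real.pi * I * τ)) (Complex.exp (2 * Real.pi * I * τ)) *
        (qPoch (-Complex.exp (2 * Real.pi * I * u)) (Complex.exp (2 * Real.pi * I * τ)) *
          qPoch (-Complex.exp (2 * Real.pi * I * (τ - u)))
            (Complex.exp (2 * Real.pi * I * τ))) := by
  have hp := norm_cexp_two_pi_I_mul_lt_one hτ
  have h0 := qPoch_ne_zero hp hp
  have t1 := (tendsto_qPoch (-Complex.exp (2 * Real.pi * I * u)) hp).mul
    (tendsto_qPoch (-Complex.exp (2 * Real.pi * I * (τ - u))) hp)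
  simp only [neg_mul, sub_neg_eq_add, finite_triple_product] at t1
  obtain ⟨C, hC0, hC⟩ := exists_norm_gaussBinom_le hp
  have hs := (summable_jacobiTheta₂_term_iff (u - τ / 2) τ).mpr hτ
  have t2 := tendsto_tsum_of_dominated_convergence (𝓕 := atTop)
    (f := fun (M : ℕ) (m : ℤ) ↦ if -(M : ℤ) ≤ m then jacobiTheta₂_term m (u - τ / 2) τ *
      gaussBinom (Complex.exp (2 * Real.pi * I * τ)) (2 * M) (m + M).toNat else 0)
    (g := fun m ↦ jacobiTheta₂_term m (u - τ / 2) τ *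
      (qPoch (Complex.exp (2 * Real.pi * I * τ)) (Complex.exp (2 * Real.pi * I * τ)))⁻¹)
    (hs.norm.mul_right C) (fun m ↦ ?_) (Eventually.of_forall fun M m ↦ ?_)
  · have h := tendsto_nhds_unique t1 t2
    rw [tsum_mul_right] at h
    rw [h, jacobiTheta₂, mul_comm, mul_assoc, inv_mul_cancel₀ h0, mul_one]
  · refine ((tendsto_gaussBinom hp m).const_mul _).congr' ?_
    filter_upwards [eventually_ge_atTop m.natAbs] with M hM
    rw [if_pos (by omega)]
  · split_ifs
    · rw [norm_mul]
      gcongr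
      exact hC _ _
    · rw [norm_zero]
      positivity

lemma exp_mul_jacobiTheta₂_term (z τ : ℂ) (k : ℤ) :
    Complex.exp (Real.pi * I * τ / 4 + I * z) *
      jacobiTheta₂_term k (z / Real.pi + τ + 1 / 2 - τ / 2) τ =
      (-1) ^ k * Complex.exp (Real.pi * I * τ * (2 * k + 1) ^ 2 / 4) *
        Complex.exp ((2 * k + 1) * z * I) := by
  have hπ : (Real.pi : ℂ) ≠ 0 := Complex.ofReal_ne_zero.mpr Real.pi_ne_zero
  rw [← Complex.exp_pi_mul_I, ← Complex.exp_int_mul, jacobiTheta₂_term, ← Complex.exp_add,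
    ← Complex.exp_add, ← Complex.exp_add]
  congr 1
  field_simp
  ring

lemma theta1_eq_jacobiTheta₂ (z : ℂ) {τ : ℂ} (hτ : 0 < τ.im) :
    theta1 z τ = -I * Complex.exp (Real.pi * I * τ / 4 + I * z) *
      jacobiTheta₂ (z / Real.pi + τ + 1 / 2 - τ / 2) τ := by
  have hs := (summable_jacobiTheta₂_term_iff (z / Real.pi + τ + 1 / 2 - τ / 2) τ).mpr hτ
  have h1 : Summable fun n : ℕ ↦ jacobiTheta₂_term n (z / Real.pi + τ + 1 / 2 - τ / 2) τ :=
    hs.comp_injective (i := fun n : ℕ ↦ (n : ℤ)) Nat.cast_injective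
  have h2 : Summable fun n : ℕ ↦
      jacobiTheta₂_term (-((n : ℤ) + 1)) (z / Real.pi + τ + 1 / 2 - τ / 2) τ :=
    hs.comp_injective (i := fun n : ℕ ↦ -((n : ℤ) + 1)) fun a b h ↦ by simp only at h; omega
  rw [theta1, jacobiTheta₂, tsum_of_nat_of_neg_add_one
    (f := fun k ↦ jacobiTheta₂_term k (z / Real.pi + τ + 1 / 2 - τ / 2) τ) h1 h2, ← h1.tsum_add h2,
    ← tsum_mul_left, ← tsum_mul_left]
  refine tsum_congr fun n ↦ ?_
  have hneg : (-1 : ℂ) ^ (-((n : ℤ) + 1)) = -(-1) ^ n := by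
    rw [zpow_neg, zpow_add_one₀ (by norm_num), zpow_natCast]
    rcases neg_one_pow_eq_or ℂ n with h | h <;> simp [h]
  have hc : 2 * ((-((n : ℤ) + 1) : ℤ) : ℂ) + 1 = -(2 * n + 1) := by
    push_cast
    ring
  rw [mul_add, mul_assoc (-I), mul_assoc (-I), exp_mul_jacobiTheta₂_term,
    exp_mul_jacobiTheta₂_term, hneg, hc, zpow_natCast, Int.cast_natCast, Complex.sin, neg_sq]
  ring_nf

lemma qPoch_eq_one_sub_mul (a : ℂ) {p : ℂ} (hp : ‖p‖ < 1) :
    qPoch a p = (1 - a) * qPoch (p * a) p := by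
  have h : (fun i : ℕ ↦ 1 - a * p ^ (i + 1)) = fun i ↦ 1 - p * a * p ^ i := by
    ext i
    ring
  rw [qPoch, qPoch, tprod_eq_zero_mul' (by rw [h]; exact multipliable_qPoch _ hp), h]
  simp

/-- The infinite product factor of `θ₁(z | τ)`, with `p = e^{2πiτ}`:
`∏_{k=1}^∞ (1 - p^k e^{2iz}) (1 - p^k e^{-2iz})`. -/
noncomputable def thetaProd (z τ : ℂ) : ℂ :=
  qPoch (Complex.exp (2 * Real.pi * I * τ) * Complex.exp (2 * I * z))
      (Complex.exp (2 * Real.pi * I * τ)) *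
    qPoch (Complex.exp (2 * Real.pi * I * τ) * Complex.exp (-(2 * I * z)))
      (Complex.exp (2 * Real.pi * I * τ))

/-- The factor of `θ₁(z | τ)` that does not depend on `z`. -/
noncomputable def thetaConst (τ : ℂ) : ℂ :=
  Complex.exp (Real.pi * I * τ / 4) *
    qPoch (Complex.exp (2 * Real.pi * I * τ)) (Complex.exp (2 * Real.pi * I * τ))

lemma thetaConst_ne_zero {τ : ℂ} (hτ : 0 < τ.im) : thetaConst τ ≠ 0 :=
  mul_ne_zero (Complex.exp_ne_zero _)
    (qPoch_ne_zero (norm_cexp_two_pi_I_mul_lt_one hτ) (norm_cexp_two_pi_I_mul_lt_one hτ))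

/-- The product formula for `θ₁`. -/
lemma theta1_eq_prod (z : ℂ) {τ : ℂ} (hτ : 0 < τ.im) :
    theta1 z τ = thetaConst τ * (2 * Complex.sin z) * thetaProd z τ := by
  have hπ : (Real.pi : ℂ) ≠ 0 := Complex.ofReal_ne_zero.mpr Real.pi_ne_zero
  have hp := norm_cexp_two_pi_I_mul_lt_one hτ
  have e1 : -Complex.exp (2 * Real.pi * I * (z / Real.pi + τ + 1 / 2)) =
      Complex.exp (2 * Real.pi * I * τ) * Complex.exp (2 * I * z) := by
    rw [← Complex.exp_add, show 2 * Real.pi * I * (z / Real.pi + τ + 1 / 2) =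
      2 * Real.pi * I * τ + 2 * I * z + Real.pi * I by field_simp; ring, Complex.exp_add _ (_ * I),
      Complex.exp_pi_mul_I]
    ring
  have e2 : -Complex.exp (2 * Real.pi * I * (τ - (z / Real.pi + τ + 1 / 2))) =
      Complex.exp (-(2 * I * z)) := by
    rw [show 2 * Real.pi * I * (τ - (z / Real.pi + τ + 1 / 2)) =
      -(2 * I * z) - Real.pi * I by field_simp; ring, Complex.exp_sub, Complex.exp_pi_mul_I]
    ring
  have e3 : 2 * Complex.sin z = -I * Complex.exp (I * z) * (1 - Complex.exp (-(2 * I * z))) := by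
    rw [mul_sub, mul_assoc (-I) _ (Complex.exp _), ← Complex.exp_add, Complex.sin]
    ring_nf
  rw [theta1_eq_jacobiTheta₂ z hτ, jacobi_triple_product _ hτ, e1, e2,
    qPoch_eq_one_sub_mul (Complex.exp (-(2 * I * z))) hp, e3, Complex.exp_add, thetaConst,
    thetaProd]
  ring

lemma continuous_qPoch {p : ℂ} (hp : ‖p‖ < 1) : Continuous fun a ↦ qPoch a p := by
  refine continuous_iff_continuousAt.mpr fun a ↦ ?_
  unfold ContinuousAt qPoch
  simp_rw [sub_eq_add_neg]
  refine tendsto_tprod_one_add_of_dominated_convergence (bound := fun i ↦ (‖a‖ + 1) * ‖p‖ ^ i)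
    ((summable_geometric_of_lt_one (norm_nonneg p) hp).mul_left _) (fun i ↦ ?_) ?_
  · exact (by fun_prop : Continuous fun x : ℂ ↦ -(x * p ^ i)).tendsto a
  · filter_upwards [(continuous_norm.tendsto a).eventually_lt_const (lt_add_one ‖a‖)] with x hx i
    rw [norm_neg, norm_mul, norm_pow]
    gcongr

lemma continuous_thetaProd {τ : ℂ} (hτ : 0 < τ.im) : Continuous fun z ↦ thetaProd z τ := by
  have hc := continuous_qPoch (norm_cexp_two_pi_I_mul_lt_one hτ)
  exact (hc.comp (by fun_prop)).mul (hc.comp (by fun_prop))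

lemma theta1'_zero {τ : ℂ} (hτ : 0 < τ.im) :
    theta1' 0 τ = thetaConst τ * 2 * thetaProd 0 τ := by
  refine HasDerivAt.deriv ?_
  rw [hasDerivAt_iff_tendsto_slope_zero]
  have hsin := hasDerivAt_iff_tendsto_slope_zero.mp (Complex.hasDerivAt_sin 0)
  have hprod : Tendsto (fun z ↦ thetaProd z τ) (𝓝[≠] 0) (𝓝 (thetaProd 0 τ)) :=
    ((continuous_thetaProd hτ).tendsto 0).mono_left nhdsWithin_le_nhds
  have h := (hsin.const_mul (thetaConst τ * 2)).mul hprod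
  simp only [Complex.cos_zero, mul_one] at h
  refine h.congr fun t ↦ ?_
  simp only [theta1_eq_prod _ hτ, zero_add, Complex.sin_zero, smul_eq_mul]
  ring

lemma thetaProd_zero (τ : ℂ) : thetaProd 0 τ =
    qPoch (Complex.exp (2 * Real.pi * I * τ)) (Complex.exp (2 * Real.pi * I * τ)) ^ 2 := by
  simp [thetaProd, sq]

lemma thetaProd_pi_div_two (τ : ℂ) : thetaProd (Real.pi / 2) τ =
    qPoch (-Complex.exp (2 * Real.pi * I * τ)) (Complex.exp (2 * Real.pi * I * τ)) ^ 2 := by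
  have h1 : Complex.exp (2 * I * (Real.pi / 2)) = -1 := by
    rw [← Complex.exp_pi_mul_I]
    ring_nf
  simp [thetaProd, sq, Complex.exp_neg, h1]

lemma prod_one_sub_mul_pow {n : ℕ} {ζ : ℂ} (hn : 0 < n) (hζ : IsPrimitiveRoot ζ n) (a : ℂ) :
    ∏ j ∈ Finset.range n, (1 - a * ζ ^ j) = 1 - a ^ n := by
  have h := congrArg (Polynomial.eval 1) (X_pow_sub_C_eq_prod hζ hn (α := a) rfl)
  simpa [Polynomial.eval_prod, mul_comm] using h.symm

lemma prod_qPoch_mul_pow {n : ℕ} {ζ p : ℂ} (hn : 0 < n) (hζ : IsPrimitiveRoot ζ n)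
    (hp : ‖p‖ < 1) (a : ℂ) :
    ∏ j ∈ Finset.range n, qPoch (a * ζ ^ j) p = qPoch (a ^ n) (p ^ n) := by
  unfold qPoch
  rw [← Multipliable.tprod_finsetProd fun j _ ↦ multipliable_qPoch _ hp]
  refine tprod_congr fun i ↦ ?_
  rw [← pow_mul, mul_comm n i, pow_mul, ← mul_pow, ← prod_one_sub_mul_pow hn hζ]
  refine Finset.prod_congr rfl fun j _ ↦ ?_
  ring

lemma im_neg_one_div_pos {τ : ℂ} (hτ : 0 < τ.im) : 0 < (-1 / τ).im := by
  rw [show -1 / τ = (-τ)⁻¹ by rw [inv_neg]; ring]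
  exact UpperHalfPlane.im_inv_neg_coe_pos ⟨τ, hτ⟩

lemma norm_exp_pi_I_mul_lt_one {τ : ℂ} (hτ : 0 < τ.im) :
    ‖Complex.exp (Real.pi * I * τ)‖ < 1 := by
  have h := norm_cexp_two_pi_I_mul_lt_one (τ := τ / 2) (by simpa using hτ)
  rwa [show 2 * Real.pi * I * (τ / 2) = Real.pi * I * τ by ring] at h

lemma prod_thetaProd {n : ℕ} (hn : 0 < n) {τ : ℂ} (hτ : 0 < τ.im) :
    ∏ j ∈ Finset.range n, thetaProd (j * Real.pi / n) τ = thetaProd 0 (n * τ) := by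
  have hζ := Complex.isPrimitiveRoot_exp n hn.ne'
  have hp := norm_cexp_two_pi_I_mul_lt_one hτ
  have e (j : ℕ) : Complex.exp (2 * I * (j * Real.pi / n)) =
      Complex.exp (2 * Real.pi * I / n) ^ j := by
    rw [← Complex.exp_nat_mul]
    congr 1
    ring
  have e' : Complex.exp (2 * Real.pi * I * (n * τ)) = Complex.exp (2 * Real.pi * I * τ) ^ n := by
    rw [← Complex.exp_nat_mul]
    congr 1
    ring
  rw [thetaProd_zero, sq, e']
  simp only [thetaProd, Complex.exp_neg, e, ← inv_pow, Finset.prod_mul_distrib]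
  rw [prod_qPoch_mul_pow hn hζ hp, prod_qPoch_mul_pow hn hζ.inv hp]

lemma prod_two_mul_sin (m : ℕ) :
    ∏ j ∈ Finset.range m, (2 * Complex.sin ((j + 1 : ℕ) * Real.pi / (m + 1 : ℕ))) = m + 1 := by
  have hm : (m : ℂ) + 1 ≠ 0 := Nat.cast_add_one_ne_zero m
  have h := (Complex.isPrimitiveRoot_exp (m + 1) m.succ_ne_zero).inv.prod_one_sub_pow_eq_order
  have e (j : ℕ) : 2 * Complex.sin ((j + 1 : ℕ) * Real.pi / (m + 1 : ℕ)) =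
      -I * Complex.exp (I * Real.pi / (m + 1 : ℕ) * (j + 1)) *
        (1 - (Complex.exp (2 * Real.pi * I / (m + 1 : ℕ)))⁻¹ ^ (j + 1)) := by
    rw [inv_pow, ← Complex.exp_nat_mul, ← Complex.exp_neg, mul_sub,
      mul_assoc (-I) _ (Complex.exp _), ← Complex.exp_add, Complex.sin]
    push_cast
    ring_nf
  simp_rw [e]
  rw [Finset.prod_mul_distrib, h, Finset.prod_mul_distrib, ← Complex.exp_sum, ← Finset.mul_sum]
  have hsum : ∑ j ∈ Finset.range m, ((j : ℂ) + 1) = m * (m + 1) / 2 := by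
    clear h e hm
    induction m with
    | zero => simp
    | succ m ih =>
      rw [Finset.sum_range_succ, ih]
      push_cast
      ring
  rw [hsum, Finset.prod_const, Finset.card_range,
    show I * Real.pi / (m + 1 : ℕ) * (m * (m + 1) / 2) = m * (Real.pi / 2 * I) by
      push_cast; field_simp,
    Complex.exp_nat_mul, Complex.exp_pi_div_two_mul_I, ← mul_pow]
  simp

lemma theta1_pi_sub (z : ℂ) {τ : ℂ} (hτ : 0 < τ.im) : theta1 (Real.pi - z) τ = theta1 z τ := by
  have e (w : ℂ) : Complex.exp (2 * I * (Real.pi - w)) = Complex.exp (-(2 * I * w)) := by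
    rw [show 2 * I * (Real.pi - w) = -(2 * I * w) + 2 * Real.pi * I by ring, Complex.exp_add,
      Complex.exp_two_pi_mul_I, mul_one]
  rw [theta1_eq_prod _ hτ, theta1_eq_prod _ hτ, Complex.sin_pi_sub, thetaProd, thetaProd,
    Complex.exp_neg, e, Complex.exp_neg, inv_inv]
  ring

lemma theta1_sq_mul_prod {n : ℕ} (hn : 3 ≤ n) {τ : ℂ} (hτ : 0 < τ.im) :
    theta1 (Real.pi / n) τ ^ 2 * ∏ j ∈ Finset.Icc 2 (n - 2), theta1 (j * Real.pi / n) τ =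
      ∏ j ∈ Finset.range (n - 1), theta1 ((j + 1 : ℕ) * Real.pi / n) τ := by
  obtain ⟨k, rfl⟩ := Nat.exists_eq_add_of_le' hn
  have hk : ((k + 3 : ℕ) : ℂ) ≠ 0 := Nat.cast_ne_zero.mpr (by omega)
  rw [show k + 3 - 1 = k + 1 + 1 by omega, Finset.prod_range_succ, Finset.prod_range_succ',
    show Finset.Icc 2 (k + 3 - 2) = Finset.Ico 2 (k + 2) by ext; simp; omega,
    Finset.prod_Ico_eq_prod_range, show k + 2 - 2 = k by omega,
    show ((k + 1 + 1 : ℕ) : ℂ) * Real.pi / (k + 3 : ℕ) = Real.pi - Real.pi / (k + 3 : ℕ) by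
      field_simp; push_cast; ring, theta1_pi_sub _ hτ]
  simp only [zero_add, Nat.cast_one, one_mul]
  rw [Finset.prod_congr rfl fun j _ ↦ by rw [show 2 + j = j + 1 + 1 by ring]]
  ring

/-- The product of the values of `θ₁` at the nonzero `n`-division points of the real period. -/
lemma theta1'_zero_mul_prod {n : ℕ} (hn : 3 ≤ n) {τ : ℂ} (hτ : 0 < τ.im) :
    theta1' 0 τ * ∏ j ∈ Finset.range (n - 1), theta1 ((j + 1 : ℕ) * Real.pi / n) τ =
      2 * n * thetaConst τ ^ n * thetaProd 0 (n * τ) := by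
  obtain ⟨m, rfl⟩ := Nat.exists_eq_add_of_le' (show 1 ≤ n by omega)
  simp only [theta1_eq_prod _ hτ, Nat.add_sub_cancel]
  rw [← prod_thetaProd m.succ_pos hτ, Finset.prod_mul_distrib, Finset.prod_mul_distrib,
    prod_two_mul_sin, theta1'_zero hτ, Finset.prod_range_succ' _ m]
  simp only [Finset.prod_const, Finset.card_range, Nat.cast_zero, zero_mul, zero_div]
  push_cast
  ring

lemma qPoch_neg_mul_qPoch {p : ℂ} (hp : ‖p‖ < 1) (a : ℂ) :
    qPoch (-a) p * qPoch a p = qPoch (a ^ 2) (p ^ 2) := by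
  unfold qPoch
  rw [← (multipliable_qPoch _ hp).tprod_mul (multipliable_qPoch _ hp)]
  exact tprod_congr fun i ↦ by ring

lemma qPoch_mul_qPoch_sq {p : ℂ} (hp : ‖p‖ < 1) :
    qPoch p (p ^ 2) * qPoch (p ^ 2) (p ^ 2) = qPoch p p := by
  have hp2 : ‖p ^ 2‖ < 1 := by
    rw [norm_pow]
    exact pow_lt_one₀ (norm_nonneg _) hp two_ne_zero
  have e1 : (fun k ↦ 1 - p * p ^ (2 * k)) = fun k ↦ 1 - p * (p ^ 2) ^ k := by
    ext k
    ring
  have e2 : (fun k ↦ 1 - p * p ^ (2 * k + 1)) = fun k ↦ 1 - p ^ 2 * (p ^ 2) ^ k := by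
    ext k
    ring
  have h := tprod_even_mul_odd (f := fun i ↦ 1 - p * p ^ i)
    (by rw [e1]; exact multipliable_qPoch _ hp2) (by rw [e2]; exact multipliable_qPoch _ hp2)
  rw [e1, e2] at h
  exact h

lemma eta_eq_qPoch (τ : ℂ) : ModularForm.eta τ = Complex.exp (2 * Real.pi * I * τ / 24) *
    qPoch (Complex.exp (2 * Real.pi * I * τ)) (Complex.exp (2 * Real.pi * I * τ)) := by
  rw [ModularForm.eta, qPoch]
  congr 1
  refine tprod_congr fun i ↦ ?_
  rw [ModularForm.eta_q_eq_pow, pow_succ']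

lemma eta_neg_one_div_sq {τ : ℂ} (hτ : 0 < τ.im) :
    ModularForm.eta (-1 / τ) ^ 2 = τ / I * ModularForm.eta τ ^ 2 := by
  have hτ0 : τ ≠ 0 := by
    rintro rfl
    simp at hτ
  have hsq {w : ℂ} (hw : w ≠ 0) : Complex.sqrt w ^ 2 = w := by
    rw [sqrt_eq_exp hw, ← Complex.exp_nat_mul]
    convert Complex.exp_log hw using 2
    push_cast
    ring
  have h : ModularForm.eta (-1 / τ) = (Complex.sqrt I)⁻¹ * (Complex.sqrt τ * ModularForm.eta τ) :=
    ModularForm.eta_comp_eq_csqrt_I_inv hτ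
  rw [h, mul_pow, mul_pow, inv_pow, hsq I_ne_zero, hsq hτ0]
  ring

/-- The transformation of `(-p; p)_∞` with `p = e^{2πiτ}` under `τ ↦ -1/τ`. -/
lemma thetaProd_pi_div_two_neg_one_div {τ : ℂ} (hτ : 0 < τ.im) :
    2 * Complex.exp (2 * Real.pi * I * (-1 / τ) / 12) * thetaProd (Real.pi / 2) (-1 / τ) =
      Complex.exp (-(Real.pi * I * τ / 12)) *
        qPoch (Complex.exp (Real.pi * I * τ)) (Complex.exp (Real.pi * I * τ) ^ 2) ^ 2 := by
  have hτ' := im_neg_one_div_pos hτ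
  have hq := norm_exp_pi_I_mul_lt_one hτ
  have hp' := norm_cexp_two_pi_I_mul_lt_one hτ'
  have hP : Complex.exp (2 * Real.pi * I * τ) = Complex.exp (Real.pi * I * τ) ^ 2 := by
    rw [← Complex.exp_nat_mul]
    congr 1
    push_cast
    ring
  have eta_two : ModularForm.eta (-1 / (τ / 2)) =
      Complex.exp (2 * Real.pi * I * (-1 / τ) / 24) ^ 2 *
        (qPoch (-Complex.exp (2 * Real.pi * I * (-1 / τ)))
          (Complex.exp (2 * Real.pi * I * (-1 / τ))) *
        qPoch (Complex.exp (2 * Real.pi * I * (-1 / τ)))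
          (Complex.exp (2 * Real.pi * I * (-1 / τ)))) := by
    rw [eta_eq_qPoch, qPoch_neg_mul_qPoch hp', ← Complex.exp_nat_mul, ← Complex.exp_nat_mul]
    push_cast
    congr 2
    · ring
    · congr 1
      ring
    · congr 1
      ring
  have eta_half : ModularForm.eta (τ / 2) =
      Complex.exp (Real.pi * I * τ / 24) *
        (qPoch (Complex.exp (Real.pi * I * τ)) (Complex.exp (2 * Real.pi * I * τ)) *
        qPoch (Complex.exp (2 * Real.pi * I * τ)) (Complex.exp (2 * Real.pi * I * τ))) := by
    rw [eta_eq_qPoch, hP, qPoch_mul_qPoch_sq hq]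
    ring_nf
  have h1 := eta_neg_one_div_sq hτ
  have h2 := eta_neg_one_div_sq (τ := τ / 2) (by simpa using hτ)
  rw [eta_two, eta_half] at h2
  rw [eta_eq_qPoch, eta_eq_qPoch] at h1
  have e1 : Complex.exp (2 * Real.pi * I * (-1 / τ) / 12) =
      Complex.exp (2 * Real.pi * I * (-1 / τ) / 24) ^ 2 := by
    rw [← Complex.exp_nat_mul]
    congr 1
    push_cast
    ring
  have e2 : Complex.exp (-(Real.pi * I * τ / 12)) =
      (Complex.exp (Real.pi * I * τ / 24) ^ 2)⁻¹ := by
    rw [← Complex.exp_nat_mul, ← Complex.exp_neg]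
    congr 1
    push_cast
    ring
  have e3 : Complex.exp (2 * Real.pi * I * τ / 24) = Complex.exp (Real.pi * I * τ / 24) ^ 2 := by
    rw [← Complex.exp_nat_mul]
    congr 1
    push_cast
    ring
  rw [e3] at h1
  rw [thetaProd_pi_div_two, e1, e2, ← hP]
  have n1 := Complex.exp_ne_zero (2 * Real.pi * I * (-1 / τ) / 24)
  have n2 := Complex.exp_ne_zero (Real.pi * I * τ / 24)
  have n3 := qPoch_ne_zero hp' hp'
  generalize Complex.exp (2 * Real.pi * I * (-1 / τ) / 24) = a at *
  generalize Complex.exp (Real.pi * I * τ / 24) = b at *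
  generalize qPoch (Complex.exp (2 * Real.pi * I * τ)) (Complex.exp (2 * Real.pi * I * τ)) = c at *
  generalize qPoch (Complex.exp (2 * Real.pi * I * (-1 / τ)))
    (Complex.exp (2 * Real.pi * I * (-1 / τ))) = d at *
  generalize qPoch (-Complex.exp (2 * Real.pi * I * (-1 / τ)))
    (Complex.exp (2 * Real.pi * I * (-1 / τ))) = x at *
  generalize qPoch (Complex.exp (Real.pi * I * τ)) (Complex.exp (2 * Real.pi * I * τ)) = y at *
  have hb : b ^ 2 * (b ^ 2)⁻¹ = 1 := mul_inv_cancel₀ (pow_ne_zero 2 n2)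
  apply mul_left_cancel₀ (mul_ne_zero (pow_ne_zero 2 (mul_ne_zero n1 n3)) (pow_ne_zero 2 n2))
  linear_combination 2 * b ^ 2 * h2 - y ^ 2 * h1 - a ^ 2 * d ^ 2 * y ^ 2 * hb

theorem theta1_combined_identity (n : ℕ) (hn : 3 ≤ n) (τ : ℂ) (hτ : 0 < τ.im)
    (q : ℂ) (hq : q = Complex.exp (Real.pi * Complex.I * τ))
    (τ' : ℂ) (hτ' : τ' = -1 / τ) :
    Complex.exp (Real.pi * Complex.I * τ * ((n : ℂ) - 1) * ((n : ℂ) + 1) / 12) *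
        (qPoch q (q ^ 2)) ^ 2 / (qPoch (q ^ n) (q ^ (2 * n))) ^ (2 * n) =
      (1 / (n : ℂ)) * (theta1' 0 (τ' / n) / theta1' 0 τ') *
        (theta1 ((Real.pi : ℂ) / 2) τ' / theta1 ((Real.pi : ℂ) / 2) (τ' / n)) *
        ((theta1 ((Real.pi : ℂ) / n) (τ' / n)) ^ 2 *
            ∏ j ∈ Finset.Icc 2 (n - 2), theta1 ((j : ℂ) * Real.pi / n) (τ' / n)) /
        (theta1 ((Real.pi : ℂ) / 2) (τ' / n)) ^ (n - 1) := by
  have hn0 : (n : ℂ) ≠ 0 := Nat.cast_ne_zero.mpr (by omega)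
  have hτ0 : τ ≠ 0 := by
    rintro rfl
    simp at hτ
  have hnτ : 0 < (n * τ).im := by
    simpa using mul_pos (Nat.cast_pos.mpr (show 0 < n by omega)) hτ
  have hτ'im : 0 < τ'.im := hτ' ▸ im_neg_one_div_pos hτ
  have hσ : τ' / n = -1 / (n * τ) := by
    rw [hτ']
    field_simp
  have hσim : 0 < (τ' / n).im := hσ ▸ im_neg_one_div_pos hnτ
  have hB := thetaProd_pi_div_two_neg_one_div hnτ
  have hA := thetaProd_pi_div_two_neg_one_div hτ
  have hqn : Complex.exp (Real.pi * I * (n * τ)) = q ^ n := by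
    rw [hq, ← Complex.exp_nat_mul]
    congr 1
    ring
  rw [← hτ', ← hq] at hA
  rw [← hσ, hqn, ← pow_mul, mul_comm n 2] at hB
  have hB0 : qPoch (q ^ n) (q ^ (2 * n)) ≠ 0 := by
    have hqlt : ‖q‖ < 1 := hq ▸ norm_exp_pi_I_mul_lt_one hτ
    refine qPoch_ne_zero ?_ ?_ <;> rw [norm_pow] <;>
      exact pow_lt_one₀ (norm_nonneg _) hqlt (by omega)
  have hBn := congrArg (· ^ n) hB
  simp only [mul_pow, ← pow_mul, ← Complex.exp_nat_mul] at hBn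
  have hD0 : thetaProd (Real.pi / 2) (τ' / n) ≠ 0 := by
    intro h
    rw [h, mul_zero] at hB
    exact mul_ne_zero (Complex.exp_ne_zero _) (pow_ne_zero 2 hB0) hB.symm
  have hR0 : thetaProd 0 τ' ≠ 0 := by
    rw [thetaProd_zero]
    exact pow_ne_zero 2 (qPoch_ne_zero (norm_cexp_two_pi_I_mul_lt_one hτ'im)
      (norm_cexp_two_pi_I_mul_lt_one hτ'im))
  have hprod := theta1'_zero_mul_prod hn hσim
  rw [mul_div_cancel₀ _ hn0] at hprod
  have hK := thetaConst_ne_zero hσim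
  have hK' := thetaConst_ne_zero hτ'im
  rw [theta1_sq_mul_prod hn hσim]
  have hrhs : (1 / (n : ℂ)) * (theta1' 0 (τ' / n) / theta1' 0 τ') *
        (theta1 ((Real.pi : ℂ) / 2) τ' / theta1 ((Real.pi : ℂ) / 2) (τ' / n)) *
        (∏ j ∈ Finset.range (n - 1), theta1 ((j + 1 : ℕ) * Real.pi / n) (τ' / n)) /
        (theta1 ((Real.pi : ℂ) / 2) (τ' / n)) ^ (n - 1) =
      2 * thetaProd (Real.pi / 2) τ' / (2 ^ n * thetaProd (Real.pi / 2) (τ' / n) ^ n) := by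
    calc
      _ = (theta1' 0 (τ' / n) *
            ∏ j ∈ Finset.range (n - 1), theta1 ((j + 1 : ℕ) * Real.pi / n) (τ' / n)) *
          theta1 (Real.pi / 2) τ' / (n * theta1' 0 τ' *
            (theta1 (Real.pi / 2) (τ' / n) ^ (n - 1) * theta1 (Real.pi / 2) (τ' / n))) := by
        field_simp
      _ = _ := by
        rw [pow_sub_one_mul (by omega), hprod, theta1'_zero hτ'im, theta1_eq_prod _ hτ'im,
          theta1_eq_prod _ hσim, Complex.sin_pi_div_two, mul_pow, mul_pow]
        field_simp
  rw [hrhs, div_eq_div_iff (pow_ne_zero _ hB0)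
    (mul_ne_zero (pow_ne_zero _ two_ne_zero) (pow_ne_zero _ hD0))]
  have hE : (n : ℂ) * (2 * Real.pi * I * (τ' / n) / 12) = 2 * Real.pi * I * τ' / 12 := by
    field_simp
  have hG : Complex.exp (Real.pi * I * τ * ((n : ℂ) - 1) * ((n : ℂ) + 1) / 12) *
      Complex.exp (n * -(Real.pi * I * (n * τ) / 12)) = Complex.exp (-(Real.pi * I * τ / 12)) := by
    rw [← Complex.exp_add]
    congr 1
    ring
  rw [hE] at hBn
  apply mul_left_cancel₀ (mul_ne_zero (Complex.exp_ne_zero (2 * Real.pi * I * τ' / 12))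
    (Complex.exp_ne_zero (n * -(Real.pi * I * (n * τ) / 12))))
  generalize Complex.exp (n * -(Real.pi * I * (n * τ) / 12)) = G at *
  generalize Complex.exp (Real.pi * I * τ * ((n : ℂ) - 1) * ((n : ℂ) + 1) / 12) = F at *
  generalize qPoch q (q ^ 2) = A at *
  generalize qPoch (q ^ n) (q ^ (2 * n)) ^ (2 * n) = B at *
  linear_combination F * A ^ 2 * G * hBn + A ^ 2 * G * B * hG - G * B * hA
end

section
/- With q = e^{-4π} and a = π^{1/4}/Γ(3/4), one has Γ_q(1/8) · Γ_q(3/8) · Γ_q(5/8) · Γ_q(7/8) = (1 - e^{-4π})² · a⁴ · 2^{-57/16} · e^{11π/16} · (√2 + 1)^{1/4}, where Γ denotes the classical gamma function. -/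
/-- Infinite q-Pochhammer symbol `(a; q)_∞ = ∏_{i=0}^∞ (1 - a qⁱ)` (real version). -/
noncomputable def qPochR (a q : ℝ) : ℝ := ∏' i : ℕ, (1 - a * q ^ i)

/-- The q-gamma function `Γ_q(z) = ((q;q)_∞ / (q^z;q)_∞) (1-q)^{1-z}` for `0 < q < 1`. -/
noncomputable def qGamma (q z : ℝ) : ℝ :=
  qPochR q q / qPochR (q ^ z) q * (1 - q) ^ (1 - z)

open Filter Topology

/-- The finite q-Pochhammer symbol `(Q; Q)_n`. -/
noncomputable def qFac (Q : ℝ) (n : ℕ) : ℝ := ∏ i ∈ Finset.range n, (1 - Q ^ (i + 1))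

/-- The reciprocal of `(Q; Q)_m`, extended by zero to negative `m`. -/
noncomputable def qFacInv (Q : ℝ) (m : ℤ) : ℝ := if m < 0 then 0 else (qFac Q m.toNat)⁻¹

section TripleProduct

open Finset

variable {q : ℝ}

lemma one_sub_mul_pow_pos {a : ℝ} (ha : a < 1) (hq0 : 0 < q) (hq1 : q < 1) (i : ℕ) :
    0 < 1 - a * q ^ i := by
  have h1 := pow_le_one₀ hq0.le hq1.le (n := i)
  have h2 := pow_pos hq0 i
  rcases le_or_gt a 0 with h | h <;> nlinarith

lemma summable_neg_mul_pow (a : ℝ) (hq0 : 0 < q) (hq1 : q < 1) :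
    Summable fun i : ℕ => -(a * q ^ i) :=
  ((summable_geometric_of_lt_one hq0.le hq1).mul_left a).neg

lemma multipliable_one_sub_mul_pow (a : ℝ) (hq0 : 0 < q) (hq1 : q < 1) :
    Multipliable fun i : ℕ => 1 - a * q ^ i := by
  simpa [sub_eq_add_neg] using
    multipliable_one_add_of_summable (summable_neg_mul_pow a hq0 hq1).norm

lemma tendsto_qPochR (a : ℝ) (hq0 : 0 < q) (hq1 : q < 1) :
    Tendsto (fun n => ∏ i ∈ range n, (1 - a * q ^ i)) atTop (𝓝 (qPochR a q)) :=
  (multipliable_one_sub_mul_pow a hq0 hq1).hasProd.tendsto_prod_nat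

lemma qPochR_pos {a : ℝ} (ha : a < 1) (hq0 : 0 < q) (hq1 : q < 1) : 0 < qPochR a q := by
  have h := Real.rexp_tsum_eq_tprod (f := fun i : ℕ => 1 - a * q ^ i)
    (one_sub_mul_pow_pos ha hq0 hq1) (by
      simpa [sub_eq_add_neg] using
        Real.summable_log_one_add_of_summable (summable_neg_mul_pow a hq0 hq1))
  rw [qPochR, ← h]
  exact Real.exp_pos _

lemma qFac_eq (q : ℝ) (n : ℕ) : qFac q n = ∏ i ∈ range n, (1 - q * q ^ i) := by
  simp [qFac, pow_succ']

lemma tendsto_qFac (hq0 : 0 < q) (hq1 : q < 1) :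
    Tendsto (qFac q) atTop (𝓝 (qPochR q q)) := by
  simpa only [← qFac_eq] using tendsto_qPochR q hq0 hq1

lemma qFac_pos (hq0 : 0 < q) (hq1 : q < 1) (n : ℕ) : 0 < qFac q n := by
  rw [qFac_eq]
  exact prod_pos fun i _ => one_sub_mul_pow_pos hq1 hq0 hq1 i

lemma qFac_succ (q : ℝ) (n : ℕ) : qFac q (n + 1) = qFac q n * (1 - q ^ (n + 1)) :=
  prod_range_succ _ _

lemma qFac_antitone (hq0 : 0 < q) (hq1 : q < 1) : Antitone (qFac q) := by
  refine antitone_nat_of_succ_le fun n => ?_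
  rw [qFac_succ]
  have := qFac_pos hq0 hq1 n
  have := pow_pos hq0 (n + 1)
  nlinarith

lemma qPochR_le_qFac (hq0 : 0 < q) (hq1 : q < 1) (n : ℕ) : qPochR q q ≤ qFac q n :=
  (qFac_antitone hq0 hq1).le_of_tendsto (tendsto_qFac hq0 hq1) n

lemma qFac_le_one (hq0 : 0 < q) (hq1 : q < 1) (n : ℕ) : qFac q n ≤ 1 := by
  simpa [qFac] using qFac_antitone hq0 hq1 (Nat.zero_le n)

lemma qFacInv_natCast (q : ℝ) (n : ℕ) : qFacInv q n = (qFac q n)⁻¹ := by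
  simp [qFacInv]

lemma qFacInv_of_neg (q : ℝ) {m : ℤ} (hm : m < 0) : qFacInv q m = 0 := by
  simp [qFacInv, hm]

lemma qFacInv_sub_one (hq0 : 0 < q) (hq1 : q < 1) (m : ℤ) :
    qFacInv q (m - 1) = (1 - q ^ m) * qFacInv q m := by
  rcases lt_trichotomy m 0 with h | rfl | h
  · simp [qFacInv_of_neg q h, qFacInv_of_neg q (show m - 1 < 0 by lia)]
  · simp [qFacInv_of_neg]
  · obtain ⟨n, rfl⟩ : ∃ n : ℕ, m = (n + 1 : ℕ) := ⟨(m - 1).toNat, by lia⟩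
    have h1 : ((n + 1 : ℕ) : ℤ) - 1 = (n : ℕ) := by push_cast; ring
    rw [h1, qFacInv_natCast, qFacInv_natCast, qFac_succ, zpow_natCast]
    have := (qFac_pos hq0 hq1 n).ne'
    have h2 : 1 - q ^ (n + 1) ≠ 0 := by
      have := pow_lt_one₀ hq0.le hq1 (Nat.succ_ne_zero n)
      exact (sub_pos.2 this).ne'
    field_simp

lemma qFacInv_nonneg (hq0 : 0 < q) (hq1 : q < 1) (m : ℤ) : 0 ≤ qFacInv q m := by
  unfold qFacInv
  split_ifs
  · rfl
  · exact inv_nonneg.2 (qFac_pos hq0 hq1 _).le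

lemma qFacInv_le (hq0 : 0 < q) (hq1 : q < 1) (m : ℤ) : qFacInv q m ≤ (qPochR q q)⁻¹ := by
  have hp := qPochR_pos hq1 hq0 hq1
  unfold qFacInv
  split_ifs
  · exact inv_nonneg.2 hp.le
  · exact inv_anti₀ hp (qPochR_le_qFac hq0 hq1 _)

lemma tendsto_qFacInv (hq0 : 0 < q) (hq1 : q < 1) :
    Tendsto (qFacInv q) atTop (𝓝 (qPochR q q)⁻¹) := by
  have h : Tendsto (fun m : ℤ => (qFac q m.toNat)⁻¹) atTop (𝓝 (qPochR q q)⁻¹) :=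
    ((tendsto_qFac hq0 hq1).comp
      (tendsto_atTop.2 fun n => by
        filter_upwards [eventually_ge_atTop (n : ℤ)] with m hm
        lia)).inv₀ (qPochR_pos hq1 hq0 hq1).ne'
  refine h.congr' ?_
  filter_upwards [eventually_ge_atTop 0] with m hm
  simp [qFacInv, not_lt.2 hm]

/-- The finite form of the Jacobi triple product. -/
lemma hasSum_finite_tripleProduct {z : ℝ} (hq0 : 0 < q) (hq1 : q < 1) (hz : z ≠ 0) (N : ℕ) :
    HasSum (fun k : ℤ => qFac (q ^ 2) (2 * N) * qFacInv (q ^ 2) (N - k) *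
        qFacInv (q ^ 2) (N + k) * (q ^ (k ^ 2) * z ^ k))
      (∏ n ∈ range N, ((1 + z * q ^ (2 * n + 1)) * (1 + z⁻¹ * q ^ (2 * n + 1)))) := by
  have hQ0 : 0 < q ^ 2 := by positivity
  have hQ1 : q ^ 2 < 1 := pow_lt_one₀ hq0.le hq1 two_ne_zero
  induction N with
  | zero =>
    have : ∀ k : ℤ, k ≠ 0 → qFac (q ^ 2) (2 * 0) * qFacInv (q ^ 2) ((0 : ℕ) - k) *
        qFacInv (q ^ 2) ((0 : ℕ) + k) * (q ^ (k ^ 2) * z ^ k) = 0 := by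
      intro k hk
      rcases lt_or_gt_of_ne hk with h | h
      · simp [qFacInv_of_neg _ h]
      · simp [qFacInv_of_neg _ (show -k < 0 by lia)]
    simpa [qFac, qFacInv] using hasSum_single 0 this
  | succ N ih =>
    rw [prod_range_succ]
    have h1 := ih.mul_left (1 + q ^ (4 * N + 2))
    have h2 := ((Equiv.subRight (1 : ℤ)).hasSum_iff.2 ih).mul_left (z * q ^ (2 * N + 1))
    have h3 := ((Equiv.addRight (1 : ℤ)).hasSum_iff.2 ih).mul_left (z⁻¹ * q ^ (2 * N + 1))
    convert (h1.add h2).add h3 using 1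
    · rfl
    · funext k
      simp only [Function.comp_apply, Equiv.subRight_apply, Equiv.coe_addRight]
      have e1 := qFacInv_sub_one hQ0 hQ1 (N + 1 - k)
      have e2 := qFacInv_sub_one hQ0 hQ1 (N - k)
      have e3 := qFacInv_sub_one hQ0 hQ1 (N + 1 + k)
      have e4 := qFacInv_sub_one hQ0 hQ1 (N + k)
      rw [show (N : ℤ) + 1 - k - 1 = N - k by ring] at e1
      rw [show (N : ℤ) + 1 + k - 1 = N + k by ring] at e3
      rw [show (N : ℤ) - (k - 1) = N + 1 - k by ring, show (N : ℤ) + (k - 1) = N + k - 1 by ring,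
        show (N : ℤ) - (k + 1) = N - k - 1 by ring, show (N : ℤ) + (k + 1) = N + 1 + k by ring,
        e2, e4, e1, e3, show 2 * (N + 1) = 2 * N + 1 + 1 by ring, qFac_succ, qFac_succ]
      push_cast
      have hqn := hq0.ne'
      have hsq (m : ℤ) : (q ^ 2) ^ m = (q ^ m) ^ 2 := by rw [sq, sq, mul_zpow]
      have z1 : (q ^ 2) ^ ((N : ℤ) + 1 - k) = (q ^ N) ^ 2 * q ^ 2 / (q ^ k) ^ 2 := by
        rw [hsq, zpow_sub₀ hqn, zpow_add_one₀ hqn, zpow_natCast, div_pow, mul_pow]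
      have z2 : (q ^ 2) ^ ((N : ℤ) - k) = (q ^ N) ^ 2 / (q ^ k) ^ 2 := by
        rw [hsq, zpow_sub₀ hqn, zpow_natCast, div_pow]
      have z3 : (q ^ 2) ^ ((N : ℤ) + k) = (q ^ N) ^ 2 * (q ^ k) ^ 2 := by
        rw [hsq, zpow_add₀ hqn, zpow_natCast, mul_pow]
      have z4 : (q ^ 2) ^ ((N : ℤ) + 1 + k) = (q ^ N) ^ 2 * q ^ 2 * (q ^ k) ^ 2 := by
        rw [hsq, zpow_add₀ hqn, zpow_add_one₀ hqn, zpow_natCast, mul_pow, mul_pow]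
      have z5 : q ^ ((k - 1) ^ 2) = q ^ (k ^ 2) * q / (q ^ k) ^ 2 := by
        rw [show (k - 1) ^ 2 = k ^ 2 + 1 - (k + k) by ring, zpow_sub₀ hqn, zpow_add_one₀ hqn,
          zpow_add₀ hqn k k, ← sq]
      have z6 : q ^ ((k + 1) ^ 2) = q ^ (k ^ 2) * q * (q ^ k) ^ 2 := by
        rw [show (k + 1) ^ 2 = k ^ 2 + 1 + (k + k) by ring, zpow_add₀ hqn, zpow_add_one₀ hqn,
          zpow_add₀ hqn k k, ← sq]
      have hw : q ^ k ≠ 0 := zpow_ne_zero _ hqn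
      have hzk : z ^ k ≠ 0 := zpow_ne_zero _ hz
      rw [z1, z2, z3, z4, z5, z6, zpow_sub_one₀ hz, zpow_add_one₀ hz,
        show q ^ (4 * N + 2) = (q ^ N) ^ 4 * q ^ 2 by ring,
        show q ^ (2 * N + 1) = (q ^ N) ^ 2 * q by ring,
        show (q ^ 2) ^ (2 * N + 1) = (q ^ N) ^ 4 * q ^ 2 by ring,
        show (q ^ 2) ^ (2 * N + 1 + 1) = (q ^ N) ^ 4 * q ^ 4 by ring]
      field_simp
      ring
    · generalize (∏ n ∈ range N, ((1 + z * q ^ (2 * n + 1)) * (1 + z⁻¹ * q ^ (2 * n + 1)))) = c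
      field_simp
      ring

/-- The Jacobi triple product, as a limit of partial products. -/
lemma tendsto_tripleProduct {z : ℝ} (hq0 : 0 < q) (hq1 : q < 1) (hz : z ≠ 0)
    (hs : Summable fun k : ℤ => q ^ (k ^ 2) * z ^ k) :
    Tendsto (fun N => ∏ n ∈ range N, ((1 + z * q ^ (2 * n + 1)) * (1 + z⁻¹ * q ^ (2 * n + 1))))
      atTop (𝓝 ((qPochR (q ^ 2) (q ^ 2))⁻¹ * ∑' k : ℤ, q ^ (k ^ 2) * z ^ k)) := by
  have hQ0 : 0 < q ^ 2 := by positivity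
  have hQ1 : q ^ 2 < 1 := pow_lt_one₀ hq0.le hq1 two_ne_zero
  have hP := qPochR_pos hQ1 hQ0 hQ1
  simp only [← fun N => (hasSum_finite_tripleProduct hq0 hq1 hz N).tsum_eq, ← tsum_mul_left]
  refine tendsto_tsum_of_dominated_convergence
    (bound := fun k : ℤ => (qPochR (q ^ 2) (q ^ 2))⁻¹ * (qPochR (q ^ 2) (q ^ 2))⁻¹ *
      ‖q ^ (k ^ 2) * z ^ k‖) (hs.norm.mul_left _) (fun k => ?_) (.of_forall fun N k => ?_)
  · refine Tendsto.mul_const _ ?_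
    have h1 : Tendsto (fun N : ℕ => qFac (q ^ 2) (2 * N)) atTop (𝓝 (qPochR (q ^ 2) (q ^ 2))) :=
      (tendsto_qFac hQ0 hQ1).comp (tendsto_id.const_mul_atTop' two_pos)
    have h2 : Tendsto (fun N : ℕ => qFacInv (q ^ 2) (N - k)) atTop
        (𝓝 (qPochR (q ^ 2) (q ^ 2))⁻¹) :=
      (tendsto_qFacInv hQ0 hQ1).comp
        (tendsto_atTop_add_const_right _ (-k) tendsto_natCast_atTop_atTop)
    have h3 : Tendsto (fun N : ℕ => qFacInv (q ^ 2) (N + k)) atTop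
        (𝓝 (qPochR (q ^ 2) (q ^ 2))⁻¹) :=
      (tendsto_qFacInv hQ0 hQ1).comp
        (tendsto_atTop_add_const_right _ k tendsto_natCast_atTop_atTop)
    simpa [hP.ne'] using (h1.mul h2).mul h3
  · rw [norm_mul]
    refine mul_le_mul_of_nonneg_right ?_ (norm_nonneg _)
    have a1 := qFac_pos hQ0 hQ1 (2 * N)
    have a2 := qFac_le_one hQ0 hQ1 (2 * N)
    have b1 := qFacInv_nonneg hQ0 hQ1 (N - k)
    have b2 := qFacInv_le hQ0 hQ1 (N - k)
    have c1 := qFacInv_nonneg hQ0 hQ1 (N + k)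
    have c2 := qFacInv_le hQ0 hQ1 (N + k)
    rw [Real.norm_of_nonneg (by positivity)]
    exact mul_le_mul ((mul_le_mul a2 b2 b1 zero_le_one).trans_eq (one_mul _)) c2 c1
      (inv_nonneg.2 hP.le)

end TripleProduct

section Theta

open Finset

/-- The theta constant `θ₃`, as a function of the nome. -/
noncomputable def thetaThree (q : ℝ) : ℝ := ∑' n : ℤ, q ^ (n ^ 2)

/-- The theta constant `θ₄`, as a function of the nome. -/
noncomputable def thetaFour (q : ℝ) : ℝ := ∑' n : ℤ, q ^ (n ^ 2) * (-1) ^ n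

/-- The theta constant `θ₂` without its factor `q ^ (1 / 4)`, as a function of the nome. -/
noncomputable def thetaTwoReduced (q : ℝ) : ℝ := ∑' n : ℤ, q ^ (n ^ 2) * q ^ n

variable {q : ℝ}

lemma summable_zpow_of_abs_sub_one_le (hq0 : 0 < q) (hq1 : q < 1) {f : ℤ → ℤ}
    (hf : ∀ n, |n| - 1 ≤ f n) : Summable fun n => q ^ f n := by
  have h : Summable fun n : ℤ => q ^ |n| := by
    refine Summable.of_nat_of_neg ?_ ?_ <;>
      simpa using summable_geometric_of_lt_one hq0.le hq1
  refine Summable.of_nonneg_of_le (fun n => (zpow_pos hq0 _).le) (fun n => ?_) (h.mul_right q⁻¹)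
  rw [← zpow_sub_one₀ hq0.ne']
  exact zpow_le_zpow_right_of_le_one₀ hq0 hq1.le (hf n)

lemma summable_thetaThree (hq0 : 0 < q) (hq1 : q < 1) : Summable fun n : ℤ => q ^ (n ^ 2) :=
  summable_zpow_of_abs_sub_one_le hq0 hq1 fun n => by
    rw [← sq_abs]
    nlinarith [sq_nonneg (|n| - 1), abs_nonneg n]

lemma summable_thetaFour (hq0 : 0 < q) (hq1 : q < 1) :
    Summable fun n : ℤ => q ^ (n ^ 2) * (-1) ^ n :=
  Summable.of_norm (by simpa [abs_of_pos hq0] using summable_thetaThree hq0 hq1)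

lemma summable_thetaTwoReduced (hq0 : 0 < q) (hq1 : q < 1) :
    Summable fun n : ℤ => q ^ (n ^ 2) * q ^ n := by
  simp only [← zpow_add₀ hq0.ne']
  refine summable_zpow_of_abs_sub_one_le hq0 hq1 fun n => ?_
  rcases abs_cases n with ⟨h, _⟩ | ⟨h, _⟩ <;> rw [h] <;> nlinarith [sq_nonneg (n + 1)]

lemma pow_lt_one_of_pos (hq0 : 0 < q) (hq1 : q < 1) (n : ℕ) [NeZero n] :
    0 < q ^ n ∧ q ^ n < 1 :=
  ⟨pow_pos hq0 n, pow_lt_one₀ hq0.le hq1 (NeZero.ne n)⟩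

lemma qPochR_mul_qPochR_sq (hq0 : 0 < q) (hq1 : q < 1) :
    qPochR q (q ^ 2) * qPochR (q ^ 2) (q ^ 2) = qPochR q q := by
  obtain ⟨h0, h1⟩ := pow_lt_one_of_pos hq0 hq1 2
  refine tendsto_nhds_unique ((tendsto_qPochR q h0 h1).mul (tendsto_qPochR (q ^ 2) h0 h1)) ?_
  refine ((tendsto_qPochR q hq0 hq1).comp (tendsto_id.const_mul_atTop' two_pos)).congr fun N => ?_
  simp only [Function.comp_apply, id]
  induction N with
  | zero => simp
  | succ N ih =>
    rw [show 2 * (N + 1) = 2 * N + 1 + 1 by ring, prod_range_succ, prod_range_succ,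
      prod_range_succ, prod_range_succ, ih]
    ring

lemma qPochR_neg_mul_qPochR (hq0 : 0 < q) (hq1 : q < 1) :
    qPochR (-q) q * qPochR q q = qPochR (q ^ 2) (q ^ 2) := by
  obtain ⟨h0, h1⟩ := pow_lt_one_of_pos hq0 hq1 2
  refine tendsto_nhds_unique ((tendsto_qPochR (-q) hq0 hq1).mul (tendsto_qPochR q hq0 hq1)) ?_
  refine (tendsto_qPochR (q ^ 2) h0 h1).congr fun N => ?_
  rw [← prod_mul_distrib]
  exact prod_congr rfl fun i _ => by ring

lemma qPochR_neg_one (hq0 : 0 < q) (hq1 : q < 1) : qPochR (-1) q = 2 * qPochR (-q) q := by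
  refine tendsto_nhds_unique
    ((tendsto_qPochR (-1) hq0 hq1).comp (tendsto_add_atTop_nat 1)) ?_
  refine ((tendsto_qPochR (-q) hq0 hq1).const_mul 2).congr fun N => ?_
  simp only [Function.comp_apply]
  rw [prod_range_succ', mul_comm]
  congr 1
  · exact prod_congr rfl fun i _ => by ring
  · norm_num

lemma thetaFour_mul_qPochR (hq0 : 0 < q) (hq1 : q < 1) :
    thetaFour q * qPochR (q ^ 2) (q ^ 2) = qPochR q q ^ 2 := by
  obtain ⟨h0, h1⟩ := pow_lt_one_of_pos hq0 hq1 2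
  have key := tendsto_nhds_unique
    (tendsto_tripleProduct hq0 hq1 (by norm_num) (summable_thetaFour hq0 hq1))
    (((tendsto_qPochR q h0 h1).pow 2).congr fun N => by
      rw [← prod_pow]
      exact prod_congr rfl fun i _ => by norm_num; ring)
  have hP := (qPochR_pos h1 h0 h1).ne'
  rw [← thetaFour] at key
  rw [← qPochR_mul_qPochR_sq hq0 hq1, mul_pow, ← key]
  field_simp

lemma thetaTwoReduced_mul_qPochR (hq0 : 0 < q) (hq1 : q < 1) :
    thetaTwoReduced q * qPochR (q ^ 2) (q ^ 2) = 2 * qPochR (q ^ 4) (q ^ 4) ^ 2 := by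
  obtain ⟨h0, h1⟩ := pow_lt_one_of_pos hq0 hq1 2
  have key := tendsto_nhds_unique
    (tendsto_tripleProduct hq0 hq1 hq0.ne' (summable_thetaTwoReduced hq0 hq1))
    (((tendsto_qPochR (-q ^ 2) h0 h1).mul (tendsto_qPochR (-1) h0 h1)).congr fun N => by
      rw [← prod_mul_distrib]
      refine prod_congr rfl fun i _ => ?_
      have := hq0.ne'
      field_simp
      ring)
  have hP := (qPochR_pos h1 h0 h1).ne'
  rw [← thetaTwoReduced, qPochR_neg_one h0 h1] at key
  rw [show q ^ 4 = (q ^ 2) ^ 2 by ring, ← qPochR_neg_mul_qPochR h0 h1]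
  field_simp at key
  rw [key]
  ring

lemma thetaFour_pos (hq0 : 0 < q) (hq1 : q < 1) : 0 < thetaFour q := by
  obtain ⟨h0, h1⟩ := pow_lt_one_of_pos hq0 hq1 2
  have hP := qPochR_pos h1 h0 h1
  refine pos_of_mul_pos_left ?_ hP.le
  rw [thetaFour_mul_qPochR hq0 hq1]
  exact pow_pos (qPochR_pos hq1 hq0 hq1) 2

lemma thetaFour_le_thetaThree (hq0 : 0 < q) (hq1 : q < 1) : thetaFour q ≤ thetaThree q := by
  refine (summable_thetaFour hq0 hq1).tsum_le_tsum (fun n => ?_) (summable_thetaThree hq0 hq1)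
  have := zpow_pos hq0 (n ^ 2)
  rcases Int.even_or_odd n with h | h
  · simp [h.neg_one_zpow]
  · rw [h.neg_one_zpow]
    linarith

lemma thetaThree_pos (hq0 : 0 < q) (hq1 : q < 1) : 0 < thetaThree q :=
  (thetaFour_pos hq0 hq1).trans_le (thetaFour_le_thetaThree hq0 hq1)

lemma pow_zpow_eq (q : ℝ) (k : ℕ) (m : ℤ) : (q ^ k) ^ m = q ^ (k * m) := by
  rw [zpow_mul, zpow_natCast]

lemma thetaThree_add_thetaFour (hq0 : 0 < q) (hq1 : q < 1) :
    thetaThree q + thetaFour q = 2 * thetaThree (q ^ 4) := by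
  rw [thetaThree, thetaFour, thetaThree, ← tsum_mul_left,
    ← (summable_thetaThree hq0 hq1).tsum_add (summable_thetaFour hq0 hq1)]
  have hinj : Function.Injective fun n : ℤ => 2 * n := fun a b h => by simpa using h
  rw [← hinj.tsum_eq]
  · refine tsum_congr fun n => ?_
    rw [(even_two_mul n).neg_one_zpow, pow_zpow_eq]
    push_cast
    ring_nf
  · intro n hn
    rcases Int.even_or_odd n with h | h
    · obtain ⟨m, rfl⟩ := h
      exact ⟨m, by ring⟩
    · simp [h.neg_one_zpow] at hn

lemma thetaThree_sub_thetaFour (hq0 : 0 < q) (hq1 : q < 1) :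
    thetaThree q - thetaFour q = 2 * q * thetaTwoReduced (q ^ 4) := by
  rw [thetaThree, thetaFour, thetaTwoReduced, ← tsum_mul_left,
    ← (summable_thetaThree hq0 hq1).tsum_sub (summable_thetaFour hq0 hq1)]
  have hinj : Function.Injective fun n : ℤ => 2 * n + 1 := fun a b h => by simpa using h
  rw [← hinj.tsum_eq]
  · refine tsum_congr fun n => ?_
    rw [(odd_two_mul_add_one n).neg_one_zpow, pow_zpow_eq, pow_zpow_eq,
      show (2 * n + 1) ^ 2 = (4 : ℕ) * n ^ 2 + (4 : ℕ) * n + 1 by push_cast; ring,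
      zpow_add_one₀ hq0.ne', zpow_add₀ hq0.ne']
    ring
  · intro n hn
    rcases Int.even_or_odd n with h | h
    · simp [h.neg_one_zpow] at hn
    · obtain ⟨m, rfl⟩ := h
      exact ⟨m, rfl⟩

lemma tsum_eq_tsum_add_sub (f : ℤ × ℤ → ℝ) (hf : ∀ p : ℤ × ℤ, Odd (p.1 + p.2) → f p = 0) :
    ∑' p, f p = ∑' p : ℤ × ℤ, f (p.1 + p.2, p.1 - p.2) := by
  have hinj : Function.Injective fun p : ℤ × ℤ => (p.1 + p.2, p.1 - p.2) := by
    rintro ⟨a, b⟩ ⟨c, d⟩ h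
    simp only [Prod.mk.injEq] at h ⊢
    lia
  refine (hinj.tsum_eq fun p hp => ?_).symm
  rcases Int.even_or_odd (p.1 + p.2) with ⟨m, hm⟩ | h
  · exact ⟨(m, p.1 - m), by simp only [Prod.ext_iff]; lia⟩
  · exact absurd (hf p h) hp

lemma thetaThree_sq_add_thetaFour_sq (hq0 : 0 < q) (hq1 : q < 1) :
    thetaThree q ^ 2 + thetaFour q ^ 2 = 2 * thetaThree (q ^ 2) ^ 2 := by
  obtain ⟨h0, h1⟩ := pow_lt_one_of_pos hq0 hq1 2
  have s3 := (summable_thetaThree hq0 hq1).norm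
  have s4 := (summable_thetaFour hq0 hq1).norm
  have s3' := (summable_thetaThree h0 h1).norm
  simp only [sq (thetaThree _), sq (thetaFour _)]
  rw [thetaThree, thetaFour, thetaThree, tsum_mul_tsum_of_summable_norm s3 s3,
    tsum_mul_tsum_of_summable_norm s4 s4, tsum_mul_tsum_of_summable_norm s3' s3',
    ← (summable_mul_of_summable_norm s3 s3).tsum_add (summable_mul_of_summable_norm s4 s4),
    tsum_eq_tsum_add_sub, ← tsum_mul_left]
  · refine tsum_congr fun p => ?_
    have e : ((-1 : ℝ) ^ (p.1 + p.2)) * (-1) ^ (p.1 - p.2) = 1 := by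
      rw [← zpow_add₀ (by norm_num)]
      exact Even.neg_one_zpow ⟨p.1, by ring⟩
    have e' : q ^ ((p.1 + p.2) ^ 2) * q ^ ((p.1 - p.2) ^ 2)
        = (q ^ 2) ^ (p.1 ^ 2) * (q ^ 2) ^ (p.2 ^ 2) := by
      rw [pow_zpow_eq, pow_zpow_eq, ← zpow_add₀ hq0.ne', ← zpow_add₀ hq0.ne']
      congr 1
      push_cast
      ring
    linear_combination 2 * e' + q ^ ((p.1 + p.2) ^ 2) * q ^ ((p.1 - p.2) ^ 2) * e
  · intro p hp
    have e : ((-1 : ℝ) ^ p.1) * (-1) ^ p.2 = -1 := by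
      rw [← zpow_add₀ (by norm_num)]
      exact hp.neg_one_zpow
    linear_combination q ^ (p.1 ^ 2) * q ^ (p.2 ^ 2) * e

lemma thetaThree_mul_thetaFour (hq0 : 0 < q) (hq1 : q < 1) :
    thetaThree q * thetaFour q = thetaFour (q ^ 2) ^ 2 := by
  obtain ⟨h0, h1⟩ := pow_lt_one_of_pos hq0 hq1 2
  have s3 := (summable_thetaThree hq0 hq1).norm
  have s4 := (summable_thetaFour hq0 hq1).norm
  have s4' := (summable_thetaFour h0 h1).norm
  suffices thetaThree q * thetaFour q + thetaFour q * thetaThree q =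
      2 * (thetaFour (q ^ 2) * thetaFour (q ^ 2)) by linarith
  rw [thetaThree, thetaFour, thetaFour, tsum_mul_tsum_of_summable_norm s3 s4,
    tsum_mul_tsum_of_summable_norm s4 s3, tsum_mul_tsum_of_summable_norm s4' s4',
    ← (summable_mul_of_summable_norm s3 s4).tsum_add (summable_mul_of_summable_norm s4 s3),
    tsum_eq_tsum_add_sub, ← tsum_mul_left]
  · refine tsum_congr fun p => ?_
    have e : (-1 : ℝ) ^ (p.1 + p.2) = (-1) ^ p.1 * (-1) ^ p.2 := zpow_add₀ (by norm_num) _ _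
    have e₂ : (-1 : ℝ) ^ (p.1 - p.2) = (-1) ^ p.1 * (-1) ^ p.2 := by
      rw [← e, show p.1 + p.2 = p.1 - p.2 + 2 * p.2 by ring, zpow_add₀ (by norm_num),
        (even_two_mul p.2).neg_one_zpow, mul_one]
    have e' : q ^ ((p.1 + p.2) ^ 2) * q ^ ((p.1 - p.2) ^ 2)
        = (q ^ 2) ^ (p.1 ^ 2) * (q ^ 2) ^ (p.2 ^ 2) := by
      rw [pow_zpow_eq, pow_zpow_eq, ← zpow_add₀ hq0.ne', ← zpow_add₀ hq0.ne']
      congr 1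
      push_cast
      ring
    simp only [e, e₂]
    linear_combination 2 * ((-1) ^ p.1 * (-1) ^ p.2) * e'
  · intro p hp
    have e : (-1 : ℝ) ^ p.2 = -(-1) ^ p.1 := by
      rw [show p.2 = p.1 + p.2 - p.1 by ring, zpow_sub₀ (by norm_num), hp.neg_one_zpow]
      rcases Int.even_or_odd p.1 with h | h <;> simp [h.neg_one_zpow]
    linear_combination q ^ (p.1 ^ 2) * q ^ (p.2 ^ 2) * e

lemma thetaThree_exp_neg_pi_mul {t : ℝ} (ht : 0 < t) :
    thetaThree (Real.exp (-Real.pi * t)) = (√t)⁻¹ * thetaThree (Real.exp (-Real.pi / t)) := by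
  have h (s : ℝ) : thetaThree (Real.exp s) = ∑' n : ℤ, Real.exp (s * (n : ℝ) ^ 2) :=
    tsum_congr fun n => by
      rw [← Real.rpow_intCast, ← Real.exp_mul]
      push_cast
      rfl
  rw [h, h, Real.tsum_exp_neg_mul_int_sq ht, Real.sqrt_eq_rpow, one_div]

lemma tendsto_thetaThree_thetaFour (hq0 : 0 < q) (hq1 : q < 1) :
    Tendsto (fun k : ℕ => thetaThree (q ^ (2 ^ k))) atTop (𝓝 1) ∧
      Tendsto (fun k : ℕ => thetaFour (q ^ (2 ^ k))) atTop (𝓝 1) := by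
  have hk (k : ℕ) : 0 < q ^ (2 ^ k) := by positivity
  have hle (k : ℕ) (n : ℤ) : (q ^ (2 ^ k)) ^ (n ^ 2) ≤ q ^ (n ^ 2) := by
    rw [pow_zpow_eq]
    refine zpow_le_zpow_right_of_le_one₀ hq0 hq1.le ?_
    have : (1 : ℤ) ≤ ((2 ^ k : ℕ) : ℤ) := by exact_mod_cast Nat.one_le_two_pow
    nlinarith [sq_nonneg n]
  have hlim (n : ℤ) : Tendsto (fun k : ℕ => (q ^ (2 ^ k)) ^ (n ^ 2)) atTop
      (𝓝 (if n = 0 then 1 else 0)) := by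
    split_ifs with h
    · simp [h]
    · have hn : n ^ 2 = ((n.natAbs ^ 2 : ℕ) : ℤ) := by simp
      simp only [hn, zpow_natCast]
      have h2 : Tendsto (fun k : ℕ => q ^ (2 ^ k)) atTop (𝓝 0) :=
        (tendsto_pow_atTop_nhds_zero_of_lt_one hq0.le hq1).comp
          (tendsto_pow_atTop_atTop_of_one_lt one_lt_two)
      have h3 : n.natAbs ^ 2 ≠ 0 := by positivity
      have h4 := h2.pow (n.natAbs ^ 2)
      rwa [zero_pow h3] at h4
  have hone : ∑' n : ℤ, (if n = 0 then (1 : ℝ) else 0) = 1 := tsum_ite_eq 0 _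
  constructor
  · rw [← hone]
    refine tendsto_tsum_of_dominated_convergence (summable_thetaThree hq0 hq1) hlim
      (.of_forall fun k n => ?_)
    rw [Real.norm_of_nonneg (zpow_pos (hk k) _).le]
    exact hle k n
  · rw [← hone]
    refine tendsto_tsum_of_dominated_convergence (summable_thetaThree hq0 hq1) (fun n => ?_)
      (.of_forall fun k n => ?_)
    · convert (hlim n).mul_const ((-1 : ℝ) ^ n) using 2
      split_ifs with h <;> simp [h]
    · rw [norm_mul, norm_zpow (-1 : ℝ), norm_neg, norm_one, one_zpow, mul_one,
        Real.norm_of_nonneg (zpow_pos (hk k) _).le]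
      exact hle k n

end Theta

section Elliptic

open MeasureTheory Set

/-- The integrand of the symmetric complete elliptic integral. -/
noncomputable def ellipticIntegrand (a b s : ℝ) : ℝ := (√((s ^ 2 + a ^ 2) * (s ^ 2 + b ^ 2)))⁻¹

/-- The symmetric complete elliptic integral of the first kind, over the whole real line. -/
noncomputable def ellipticIntegral (a b : ℝ) : ℝ := ∫ s, ellipticIntegrand a b s

lemma ellipticIntegral_eq_two_mul (a b : ℝ) :
    ellipticIntegral a b = 2 * ∫ s in Ioi 0, ellipticIntegrand a b s := by
  rw [← integral_comp_abs]
  simp [ellipticIntegral, ellipticIntegrand]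

lemma ellipticIntegral_mul {l : ℝ} (hl : 0 < l) (a b : ℝ) :
    ellipticIntegral (l * a) (l * b) = l⁻¹ * ellipticIntegral a b := by
  have h (s : ℝ) : ellipticIntegrand (l * a) (l * b) s =
      (l ^ 2)⁻¹ * ellipticIntegrand a b (s / l) := by
    unfold ellipticIntegrand
    rw [← mul_inv, ← Real.sqrt_sq (sq_nonneg l), ← Real.sqrt_mul (by positivity)]
    congr 2
    field_simp
  simp only [ellipticIntegral, h]
  rw [integral_const_mul, Measure.integral_comp_div, abs_of_pos hl, smul_eq_mul]
  field_simp

/-- Gauss's transformation: the elliptic integral is invariant under the arithmetic-geometric mean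
step. -/
lemma ellipticIntegral_agm_step {a b c : ℝ} (ha : 0 < a) (hb : 0 < b) (hc : c ^ 2 = a * b) :
    ellipticIntegral ((a + b) / 2) c = ellipticIntegral a b := by
  have hab : 0 < a * b := mul_pos ha hb
  set f : ℝ → ℝ := fun x => (x - a * b / x) / 2 with hf
  have hderiv (x : ℝ) (hx : x ∈ Ioi (0 : ℝ)) :
      HasDerivWithinAt f ((1 + a * b / x ^ 2) / 2) (Ioi 0) x := by
    have hx0 : x ≠ 0 := ne_of_gt hx
    have h := ((hasDerivAt_id x).sub ((hasDerivAt_inv hx0).const_mul (a * b))).div_const 2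
    refine (h.congr_deriv ?_).hasDerivWithinAt
    field_simp
    ring
  have hinj : InjOn f (Ioi 0) := by
    intro x hx y hy h
    have hx0 : 0 < x := hx
    have hy0 : 0 < y := hy
    simp only [hf] at h
    field_simp at h
    have : (x - y) * (x * y + a * b) = 0 := by linear_combination h
    rcases mul_eq_zero.1 this with h | h
    · linarith
    · nlinarith [mul_pos hx0 hy0]
  have himage : f '' Ioi 0 = univ := by
    refine eq_univ_of_forall fun y => ⟨y + √(y ^ 2 + a * b), ?_, ?_⟩
    · have : |y| < √(y ^ 2 + a * b) := by
        rw [← Real.sqrt_sq_eq_abs]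
        exact Real.sqrt_lt_sqrt (sq_nonneg y) (by linarith)
      have := neg_abs_le y
      simp only [mem_Ioi]
      linarith
    · have h1 : |y| < √(y ^ 2 + a * b) := by
        rw [← Real.sqrt_sq_eq_abs]
        exact Real.sqrt_lt_sqrt (sq_nonneg y) (by linarith)
      have h2 := neg_abs_le y
      have h3 : y + √(y ^ 2 + a * b) ≠ 0 := by linarith
      have h4 := Real.sq_sqrt (show 0 ≤ y ^ 2 + a * b by positivity)
      simp only [hf]
      field_simp
      linear_combination h4
  have key := integral_image_eq_integral_abs_deriv_smul measurableSet_Ioi hderiv hinj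
    (ellipticIntegrand ((a + b) / 2) c)
  rw [himage, Measure.restrict_univ] at key
  rw [ellipticIntegral, key, ellipticIntegral_eq_two_mul, ← integral_const_mul]
  refine setIntegral_congr_fun measurableSet_Ioi fun x hx => ?_
  have hx0 : 0 < x := hx
  have e : (f x ^ 2 + ((a + b) / 2) ^ 2) * (f x ^ 2 + c ^ 2) =
      (x ^ 2 + a ^ 2) * (x ^ 2 + b ^ 2) * ((1 + a * b / x ^ 2) / 4) ^ 2 := by
    rw [hc]
    simp only [hf]
    field_simp
    ring
  have hpos : 0 < (1 + a * b / x ^ 2) / 4 := by positivity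
  simp only [ellipticIntegrand, smul_eq_mul]
  rw [e, Real.sqrt_mul (by positivity), Real.sqrt_sq hpos.le, abs_of_pos (by positivity)]
  field_simp
  norm_num

lemma integrable_inv_sq_add_sq {c : ℝ} (hc : 0 < c) :
    Integrable (fun s : ℝ => (s ^ 2 + c ^ 2)⁻¹) ∧ ∫ s : ℝ, (s ^ 2 + c ^ 2)⁻¹ = Real.pi / c := by
  have h (s : ℝ) : (s ^ 2 + c ^ 2)⁻¹ = (c ^ 2)⁻¹ * (1 + (s / c) ^ 2)⁻¹ := by
    field_simp
    ring
  simp only [h]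
  constructor
  · exact (integrable_inv_one_add_sq.comp_div hc.ne').const_mul _
  · rw [integral_const_mul, Measure.integral_comp_div (fun s : ℝ => (1 + s ^ 2)⁻¹),
      integral_univ_inv_one_add_sq, abs_of_pos hc, smul_eq_mul]
    field_simp

lemma ellipticIntegral_mem_Icc {a b : ℝ} (hb : 0 < b) (hba : b ≤ a) :
    ellipticIntegral a b ∈ Icc (Real.pi / a) (Real.pi / b) := by
  have ha : 0 < a := hb.trans_le hba
  obtain ⟨ia, ea⟩ := integrable_inv_sq_add_sq ha
  obtain ⟨ib, eb⟩ := integrable_inv_sq_add_sq hb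
  have hsq : b ^ 2 ≤ a ^ 2 := pow_le_pow_left₀ hb.le hba 2
  have hlow (s : ℝ) : (s ^ 2 + a ^ 2)⁻¹ ≤ ellipticIntegrand a b s := by
    refine inv_anti₀ (by positivity) (Real.sqrt_le_iff.2 ⟨by positivity, ?_⟩)
    rw [sq (s ^ 2 + a ^ 2)]
    gcongr
  have hupp (s : ℝ) : ellipticIntegrand a b s ≤ (s ^ 2 + b ^ 2)⁻¹ := by
    refine inv_anti₀ (by positivity) (Real.le_sqrt_of_sq_le ?_)
    rw [sq (s ^ 2 + b ^ 2)]
    gcongr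
  have hmeas : Measurable (ellipticIntegrand a b) := by
    unfold ellipticIntegrand
    fun_prop
  have iab : Integrable (ellipticIntegrand a b) := by
    refine ib.mono' hmeas.aestronglyMeasurable (.of_forall fun s => ?_)
    rw [Real.norm_of_nonneg ((hlow s).trans' (by positivity))]
    exact hupp s
  rw [← ea, ← eb]
  exact ⟨integral_mono ia iab hlow, integral_mono iab ib hupp⟩

lemma beta_eq_setIntegral {α β : ℝ} (hα : 0 < α) (hβ : 0 < β) :
    ProbabilityTheory.beta α β = ∫ x in Ioo (0 : ℝ) 1, x ^ (α - 1) * (1 - x) ^ (β - 1) := by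
  have h : Complex.betaIntegral α β =
      ((∫ x in Ioo (0 : ℝ) 1, x ^ (α - 1) * (1 - x) ^ (β - 1) : ℝ) : ℂ) := by
    rw [Complex.betaIntegral, intervalIntegral.integral_of_le zero_le_one,
      integral_Ioc_eq_integral_Ioo, ← integral_complex_ofReal]
    refine setIntegral_congr_fun measurableSet_Ioo fun x hx => ?_
    have h1 : 0 ≤ 1 - x := by linarith [hx.2]
    rw [Complex.ofReal_mul, Complex.ofReal_cpow hx.1.le, Complex.ofReal_cpow h1]
    push_cast
    rfl
  rw [ProbabilityTheory.beta_eq_betaIntegralReal α β hα hβ, h, Complex.ofReal_re]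

lemma ellipticIntegral_sqrt_two_one :
    2 * ellipticIntegral √2 1 = ProbabilityTheory.beta (1 / 4) (1 / 2) := by
  set f : ℝ → ℝ := fun s => ((1 + s ^ 2) ^ 2)⁻¹ with hf
  have hderiv (s : ℝ) (_ : s ∈ Ioi (0 : ℝ)) :
      HasDerivWithinAt f (-(4 * s * ((1 + s ^ 2) ^ 3)⁻¹)) (Ioi 0) s := by
    have h := ((((hasDerivAt_id s).pow 2).const_add 1).pow 2).inv (by simp; positivity)
    refine (h.congr_deriv ?_).hasDerivWithinAt
    have : 1 + s ^ 2 ≠ 0 := by positivity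
    simp
    field_simp
    ring
  have hinj : InjOn f (Ioi 0) := by
    intro x hx y hy h
    have hx0 : 0 < x := hx
    have hy0 : 0 < y := hy
    have h1 : (1 + x ^ 2) ^ 2 = (1 + y ^ 2) ^ 2 := inv_injective h
    have h2 : 1 + x ^ 2 = 1 + y ^ 2 :=
      (pow_left_inj₀ (by positivity) (by positivity) two_ne_zero).1 h1
    exact (pow_left_inj₀ hx0.le hy0.le two_ne_zero).1 (by linarith)
  have himage : f '' Ioi 0 = Ioo 0 1 := by
    ext v
    constructor
    · rintro ⟨s, hs, rfl⟩
      have hs0 : 0 < s := hs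
      refine ⟨by positivity, inv_lt_one_of_one_lt₀ ?_⟩
      nlinarith [sq_nonneg (s ^ 2), pow_pos hs0 2]
    · rintro ⟨h0, h1⟩
      have hv : 0 < √v := Real.sqrt_pos.2 h0
      have hv1 : √v < 1 := by
        rw [Real.sqrt_lt' one_pos]
        simpa using h1
      have hpos : 0 < (√v)⁻¹ - 1 := sub_pos.2 ((one_lt_inv₀ hv).2 hv1)
      refine ⟨√((√v)⁻¹ - 1), Real.sqrt_pos.2 hpos, ?_⟩
      simp only [hf]
      rw [Real.sq_sqrt hpos.le, add_sub_cancel, inv_pow, Real.sq_sqrt h0.le, inv_inv]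
  rw [beta_eq_setIntegral (by norm_num) (by norm_num), ← himage,
    integral_image_eq_integral_abs_deriv_smul measurableSet_Ioi hderiv hinj,
    ellipticIntegral_eq_two_mul, ← integral_const_mul, ← integral_const_mul]
  refine setIntegral_congr_fun measurableSet_Ioi fun s hs => ?_
  have hs0 : 0 < s := hs
  have hw : 0 < 1 + s ^ 2 := by positivity
  have e1 : f s ^ ((1 : ℝ) / 4 - 1) = (1 + s ^ 2) * √(1 + s ^ 2) := by
    simp only [hf]
    rw [Real.inv_rpow (by positivity), ← Real.rpow_natCast, ← Real.rpow_mul hw.le,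
      ← Real.rpow_neg hw.le, Real.sqrt_eq_rpow]
    nth_rewrite 2 [← Real.rpow_one (1 + s ^ 2)]
    rw [← Real.rpow_add hw]
    norm_num
  have e2 : (1 - f s) ^ ((1 : ℝ) / 2 - 1) = (1 + s ^ 2) / (s * √(s ^ 2 + 2)) := by
    have : 1 - f s = (s * √(s ^ 2 + 2) / (1 + s ^ 2)) ^ 2 := by
      rw [div_pow, mul_pow, Real.sq_sqrt (by positivity)]
      simp only [hf]
      field_simp
      ring
    rw [this, show (1 : ℝ) / 2 - 1 = -(1 / 2) by norm_num, Real.rpow_neg (by positivity),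
      ← Real.sqrt_eq_rpow, Real.sqrt_sq (by positivity), inv_div]
  simp only [smul_eq_mul]
  rw [e1, e2, abs_neg, abs_of_pos (by positivity), ellipticIntegrand, Real.sq_sqrt zero_le_two,
    one_pow, add_comm (s ^ 2) 1, Real.sqrt_mul (by positivity)]
  have hr : √(1 + s ^ 2) ^ 2 = 1 + s ^ 2 := Real.sq_sqrt hw.le
  have hr0 : 0 < √(1 + s ^ 2) := Real.sqrt_pos.2 hw
  have hr1 : 0 < √(s ^ 2 + 2) := Real.sqrt_pos.2 (by positivity)
  rw [← hr]
  field_simp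
  norm_num [mul_comm]

lemma ellipticIntegral_theta {q : ℝ} (hq0 : 0 < q) (hq1 : q < 1) :
    ellipticIntegral (thetaThree q ^ 2) (thetaFour q ^ 2) = Real.pi := by
  have hk0 (k : ℕ) : 0 < q ^ (2 ^ k) := by positivity
  have hk1 (k : ℕ) : q ^ (2 ^ k) < 1 := pow_lt_one₀ hq0.le hq1 (by positivity)
  have hinv (k : ℕ) : ellipticIntegral (thetaThree (q ^ (2 ^ k)) ^ 2)
      (thetaFour (q ^ (2 ^ k)) ^ 2) =
      ellipticIntegral (thetaThree q ^ 2) (thetaFour q ^ 2) := by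
    induction k with
    | zero => simp
    | succ k ih =>
      have h3 := thetaThree_pos (hk0 k) (hk1 k)
      have h4 := thetaFour_pos (hk0 k) (hk1 k)
      have e3 := thetaThree_sq_add_thetaFour_sq (hk0 k) (hk1 k)
      have e4 := thetaThree_mul_thetaFour (hk0 k) (hk1 k)
      rw [← ih, pow_succ 2 k, pow_mul, ← ellipticIntegral_agm_step (pow_pos h3 2) (pow_pos h4 2)
        (c := thetaFour ((q ^ 2 ^ k) ^ 2) ^ 2) (by rw [← e4]; ring), e3]
      congr 1
      ring
  have hmem (k : ℕ) : ellipticIntegral (thetaThree q ^ 2) (thetaFour q ^ 2) ∈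
      Icc (Real.pi / thetaThree (q ^ (2 ^ k)) ^ 2) (Real.pi / thetaFour (q ^ (2 ^ k)) ^ 2) := by
    rw [← hinv k]
    have h4 := thetaFour_pos (hk0 k) (hk1 k)
    exact ellipticIntegral_mem_Icc (pow_pos h4 2)
      (pow_le_pow_left₀ h4.le (thetaFour_le_thetaThree (hk0 k) (hk1 k)) 2)
  obtain ⟨l3, l4⟩ := tendsto_thetaThree_thetaFour hq0 hq1
  have m3 : Tendsto (fun k : ℕ => Real.pi / thetaThree (q ^ (2 ^ k)) ^ 2) atTop (𝓝 Real.pi) := by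
    simpa [div_eq_mul_inv] using ((l3.pow 2).inv₀ (by norm_num)).const_mul Real.pi
  have m4 : Tendsto (fun k : ℕ => Real.pi / thetaFour (q ^ (2 ^ k)) ^ 2) atTop (𝓝 Real.pi) := by
    simpa [div_eq_mul_inv] using ((l4.pow 2).inv₀ (by norm_num)).const_mul Real.pi
  exact le_antisymm (ge_of_tendsto' m4 fun k => (hmem k).2) (le_of_tendsto' m3 fun k => (hmem k).1)

end Elliptic

section SpecialValues

open Finset in
lemma qPochR_eight_dissection {p : ℝ} (hp0 : 0 < p) (hp1 : p < 1) :
    qPochR p (p ^ 8) * qPochR (p ^ 3) (p ^ 8) * qPochR (p ^ 5) (p ^ 8) * qPochR (p ^ 7) (p ^ 8) =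
      qPochR p (p ^ 2) := by
  obtain ⟨h0, h1⟩ := pow_lt_one_of_pos hp0 hp1 8
  obtain ⟨k0, k1⟩ := pow_lt_one_of_pos hp0 hp1 2
  refine tendsto_nhds_unique ((((tendsto_qPochR p h0 h1).mul (tendsto_qPochR (p ^ 3) h0 h1)).mul
    (tendsto_qPochR (p ^ 5) h0 h1)).mul (tendsto_qPochR (p ^ 7) h0 h1)) ?_
  refine ((tendsto_qPochR p k0 k1).comp (tendsto_id.const_mul_atTop' four_pos)).congr fun N => ?_
  simp only [Function.comp_apply, id]
  induction N with
  | zero => simp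
  | succ N ih =>
    rw [show 4 * (N + 1) = 4 * N + 1 + 1 + 1 + 1 by ring]
    simp only [prod_range_succ, ih]
    ring

/-- The theta constants at the nomes `r = exp (-π / 4)`, `r ^ 2`, `r ^ 4` and `r ^ 8`, in terms of
`θ₄ (r ^ 4)`. -/
lemma theta_relations {r : ℝ} (hr : r = Real.exp (-Real.pi / 4)) :
    thetaThree (r ^ 4) ^ 2 = √2 * thetaFour (r ^ 4) ^ 2 ∧
      thetaFour (r ^ 2) ^ 2 = (√2 - 1) * thetaFour (r ^ 4) ^ 2 ∧
      thetaFour (r ^ 8) ^ 2 = thetaThree (r ^ 4) * thetaFour (r ^ 4) ∧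
      r * thetaTwoReduced (r ^ 4) = thetaFour (r ^ 4) := by
  have hr0 : 0 < r := hr ▸ Real.exp_pos _
  have hr1 : r < 1 := by
    rw [hr, Real.exp_lt_one_iff]
    linarith [Real.pi_pos]
  have hpow (n : ℕ) : r ^ n = Real.exp (-Real.pi * (n / 4)) := by
    rw [hr, ← Real.exp_nat_mul]
    ring_nf
  obtain ⟨h20, h21⟩ := pow_lt_one_of_pos hr0 hr1 2
  obtain ⟨h40, h41⟩ := pow_lt_one_of_pos hr0 hr1 4
  have m1 : thetaThree r = 2 * thetaThree (r ^ 16) := by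
    have h := thetaThree_exp_neg_pi_mul (t := 1 / 4) (by norm_num)
    rw [show √(1 / 4 : ℝ) = 1 / 2 by
      rw [show (1 / 4 : ℝ) = (1 / 2) ^ 2 by norm_num, Real.sqrt_sq (by norm_num)]] at h
    rw [← pow_one r, ← pow_mul, hpow, hpow]
    norm_num at h ⊢
    convert h using 3
    ring_nf
  have m2 : thetaThree (r ^ 2) ^ 2 = 2 * thetaThree (r ^ 8) ^ 2 := by
    have h := thetaThree_exp_neg_pi_mul (t := 1 / 2) (by norm_num)
    have e2 : Real.exp (-Real.pi * (1 / 2)) = r ^ 2 := by rw [hpow]; norm_num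
    have e8 : Real.exp (-Real.pi / (1 / 2)) = r ^ 8 := by rw [hpow]; ring_nf
    rw [e2, e8] at h
    rw [h, mul_pow, inv_pow, Real.sq_sqrt (by norm_num)]
    norm_num
  have s1 := thetaThree_add_thetaFour hr0 hr1
  have d1 := thetaThree_sub_thetaFour hr0 hr1
  have s4 := thetaThree_add_thetaFour h40 h41
  have q2 := thetaThree_sq_add_thetaFour_sq h20 h21
  have q4 := thetaThree_sq_add_thetaFour_sq h40 h41
  have g2 := thetaThree_mul_thetaFour h20 h21
  have g4 := thetaThree_mul_thetaFour h40 h41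
  simp only [← pow_mul, Nat.reduceMul] at s4 q2 q4 g2 g4
  have b := thetaFour_pos h40 h41
  have x2 : thetaThree (r ^ 2) ^ 2 = thetaThree (r ^ 4) ^ 2 + thetaFour (r ^ 4) ^ 2 := by linarith
  have y2 : thetaFour (r ^ 2) ^ 2 = thetaThree (r ^ 4) ^ 2 - thetaFour (r ^ 4) ^ 2 := by linarith
  have hsq : (thetaThree (r ^ 4) ^ 2) ^ 2 = (√2 * thetaFour (r ^ 4) ^ 2) ^ 2 := by
    rw [mul_pow, Real.sq_sqrt zero_le_two]
    have : thetaThree (r ^ 2) ^ 2 * thetaFour (r ^ 2) ^ 2 = (thetaFour (r ^ 4) ^ 2) ^ 2 := by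
      rw [← mul_pow, g2]
    rw [x2, y2] at this
    linarith
  have hx : thetaThree (r ^ 4) ^ 2 = √2 * thetaFour (r ^ 4) ^ 2 :=
    (pow_left_inj₀ (by positivity) (by positivity) two_ne_zero).1 hsq
  exact ⟨hx, by rw [y2, hx]; ring, g4.symm, by linarith⟩

/-- The lemniscatic evaluation of `θ₃` at the nome `exp (-π)`. -/
lemma thetaThree_exp_neg_pi :
    thetaThree (Real.exp (-Real.pi)) = Real.pi ^ ((1 : ℝ) / 4) / Real.Gamma (3 / 4) := by
  have hq : Real.exp (-Real.pi / 4) ^ 4 = Real.exp (-Real.pi) := by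
    rw [← Real.exp_nat_mul]
    ring_nf
  have hx := (theta_relations rfl).1
  rw [hq] at hx
  have hq0 := Real.exp_pos (-Real.pi)
  have hq1 : Real.exp (-Real.pi) < 1 := Real.exp_lt_one_iff.2 (by linarith [Real.pi_pos])
  have h3 := thetaThree_pos hq0 hq1
  have h4 := thetaFour_pos hq0 hq1
  have hG := Real.Gamma_pos_of_pos (show (0 : ℝ) < 3 / 4 by norm_num)
  have hJ := ellipticIntegral_theta hq0 hq1
  have hscale := ellipticIntegral_mul (pow_pos h4 2) √2 1
  rw [mul_comm _ √2, ← hx, mul_one, hJ] at hscale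
  have hB := ellipticIntegral_sqrt_two_one
  rw [ProbabilityTheory.beta, show (1 : ℝ) / 4 + 1 / 2 = 3 / 4 by norm_num,
    Real.Gamma_one_half_eq] at hB
  have hrefl := Real.Gamma_mul_Gamma_one_sub (1 / 4)
  rw [show (1 : ℝ) - 1 / 4 = 3 / 4 by norm_num, show Real.pi * (1 / 4) = Real.pi / 4 by ring,
    Real.sin_pi_div_four] at hrefl
  have hpi : Real.pi ^ ((1 : ℝ) / 4) = √(√Real.pi) := by
    rw [Real.sqrt_eq_rpow, Real.sqrt_eq_rpow, ← Real.rpow_mul Real.pi_pos.le]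
    norm_num
  rw [hpi]
  refine (pow_left_inj₀ h3.le (by positivity) two_ne_zero).1 ?_
  rw [div_pow, Real.sq_sqrt (Real.sqrt_nonneg _), hx]
  have hs2 : √2 ^ 2 = (2 : ℝ) := Real.sq_sqrt zero_le_two
  have hs0 : 0 < √2 := by positivity
  have hp := Real.pi_pos
  field_simp at hscale hB hrefl ⊢
  have e1 : 2 * (Real.pi * thetaFour (Real.exp (-Real.pi)) ^ 2) * Real.Gamma (3 / 4) ^ 2 * √2 =
      Real.pi * 2 * √Real.pi := by
    rw [hscale]
    linear_combination (Real.Gamma (3 / 4) * √2) * hB + √Real.pi * hrefl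
  refine mul_left_cancel₀ (mul_pos two_pos hp).ne' ?_
  linear_combination e1

end SpecialValues

theorem qGamma_eighth_product_exp_four_pi
    (q : ℝ) (hq : q = Real.exp (-4 * Real.pi))
    (a : ℝ) (ha : a = Real.pi ^ ((1 : ℝ) / 4) / Real.Gamma (3 / 4)) :
    qGamma q (1 / 8) * qGamma q (3 / 8) * qGamma q (5 / 8) * qGamma q (7 / 8) =
      (1 - Real.exp (-4 * Real.pi)) ^ 2 * a ^ 4 * (2 : ℝ) ^ (-(57 : ℝ) / 16) *
        Real.exp (11 * Real.pi / 16) * (Real.sqrt 2 + 1) ^ ((1 : ℝ) / 4) := by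
  obtain ⟨r, hr⟩ : ∃ r, r = Real.exp (-Real.pi / 4) := ⟨_, rfl⟩
  have hr0 : 0 < r := hr ▸ Real.exp_pos _
  have hr1 : r < 1 := hr ▸ Real.exp_lt_one_iff.2 (by linarith [Real.pi_pos])
  have hqr : q = (r ^ 2) ^ 8 := by
    rw [hq, hr, ← Real.exp_nat_mul, ← Real.exp_nat_mul]
    ring_nf
  have hroot (k : ℕ) : q ^ ((k : ℝ) / 8) = (r ^ 2) ^ k := by
    rw [hqr, ← Real.rpow_natCast _ 8, ← Real.rpow_mul (by positivity), ← Real.rpow_natCast _ k]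
    congr 1
    push_cast
    ring
  obtain ⟨h20, h21⟩ := pow_lt_one_of_pos hr0 hr1 2
  obtain ⟨h40, h41⟩ := pow_lt_one_of_pos hr0 hr1 4
  obtain ⟨h80, h81⟩ := pow_lt_one_of_pos hr0 hr1 8
  obtain ⟨hq0, hq1⟩ := pow_lt_one_of_pos h20 h21 8
  rw [← hqr] at hq0 hq1
  have hdis := qPochR_eight_dissection h20 h21
  have hodd := qPochR_mul_qPochR_sq h20 h21
  have p2 := thetaFour_mul_qPochR h20 h21
  have p4 := thetaFour_mul_qPochR h40 h41
  have p8 := thetaFour_mul_qPochR h80 h81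
  have u4 := thetaTwoReduced_mul_qPochR h40 h41
  obtain ⟨x4, y2, y8, z4⟩ := theta_relations hr
  have hA : thetaThree (r ^ 4) = a := by
    rw [ha, ← thetaThree_exp_neg_pi, hr, ← Real.exp_nat_mul]
    ring_nf
  have hL : qGamma q (1 / 8) * qGamma q (3 / 8) * qGamma q (5 / 8) * qGamma q (7 / 8) =
      qPochR q q ^ 4 / qPochR (r ^ 2) ((r ^ 2) ^ 2) * (1 - q) ^ 2 := by
    have e1 := hroot 1
    have e3 := hroot 3
    have e5 := hroot 5
    have e7 := hroot 7
    push_cast at e1 e3 e5 e7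
    have hpow : (1 - q) ^ (1 - (1 : ℝ) / 8) * (1 - q) ^ (1 - (3 : ℝ) / 8) *
        (1 - q) ^ (1 - (5 : ℝ) / 8) * (1 - q) ^ (1 - (7 : ℝ) / 8) = (1 - q) ^ 2 := by
      have : 0 < 1 - q := sub_pos.2 hq1
      rw [← Real.rpow_add this, ← Real.rpow_add this, ← Real.rpow_add this, ← Real.rpow_natCast]
      norm_num
    simp only [qGamma, e1, e3, e5, e7, pow_one]
    rw [← hdis, ← hpow, ← hqr]
    simp only [div_eq_mul_inv, mul_inv]
    ring
  rw [hL, ← hq]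
  simp only [← pow_mul, Nat.reduceMul] at hqr p2 p4 p8 u4 hodd ⊢
  have E2 := qPochR_pos h21 h20 h21
  have E4 := qPochR_pos h41 h40 h41
  have E8 := qPochR_pos h81 h80 h81
  have E16 := qPochR_pos hq1 hq0 hq1
  have S := qPochR_pos h21 h40 h41
  have T3 := thetaThree_pos h40 h41
  have T4 := thetaFour_pos h40 h41
  have T2 := thetaFour_pos h20 h21
  have T8 := thetaFour_pos h80 h81
  have U : 0 < thetaTwoReduced (r ^ 4) := pos_of_mul_pos_right (z4 ▸ T4) hr0.le
  rw [← hqr] at p8 u4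
  rw [hA] at x4 y8 T3
  have hs : 0 < √2 - 1 := sub_pos.2 (Real.lt_sqrt_of_sq_lt (by norm_num))
  have hs' : 0 < √2 + 1 := by positivity
  have l2 := congrArg Real.log p2
  have l4 := congrArg Real.log p4
  have l8 := congrArg Real.log p8
  have lu := congrArg Real.log u4
  have lo := congrArg Real.log hodd
  have lx := congrArg Real.log x4
  have ly2 := congrArg Real.log y2
  have ly8 := congrArg Real.log y8
  have lz := congrArg Real.log z4
  have lr : Real.log r = -Real.pi / 4 := by rw [hr, Real.log_exp]
  have ls : Real.log (√2 - 1) + Real.log (√2 + 1) = 0 := by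
    rw [← Real.log_mul hs.ne' hs'.ne', ← Real.log_one]
    congr 1
    ring_nf
    norm_num
  have lsq : Real.log √2 = Real.log 2 / 2 := Real.log_sqrt zero_le_two
  have hmain : qPochR q q ^ 4 / qPochR (r ^ 2) (r ^ 4) =
      a ^ 4 * (2 : ℝ) ^ (-(57 : ℝ) / 16) * Real.exp (11 * Real.pi / 16) *
        (√2 + 1) ^ ((1 : ℝ) / 4) := by
    refine Real.log_injOn_pos (Set.mem_Ioi.2 (by positivity)) (Set.mem_Ioi.2 (by positivity)) ?_
    rw [Real.log_mul (by positivity) (by positivity), Real.log_mul (by positivity) (by positivity),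
      Real.log_mul (by positivity) (by positivity), Real.log_div (by positivity) (by positivity),
      Real.log_rpow two_pos, Real.log_rpow hs', Real.log_exp, Real.log_pow, Real.log_pow]
    rw [Real.log_mul (by positivity) (by positivity)] at l2 l4 l8 lu lo lx ly2 ly8 lz
    rw [Real.log_mul (by positivity) (by positivity)] at lu
    simp only [Real.log_pow] at l2 l4 l8 lu lo lx ly2 ly8 lz
    push_cast at *
    linarith
  rw [hmain]
  ring
end
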